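/- Let S be a standard graded ring over a Noetherian local ring and M a finitely generated graded S-module of finite projective dimension over S. Then reg(M) = reg^S(M) + reg(S), where reg denotes Castelnuovo–Mumford regularity defined via local cohomology with respect to S_+ and reg^S(M) := sup_i { b_i^S(M) − i } is the regularity measured by the graded Betti numbers Tor_i^S(M, S_0). -/

import Mathlib

/-!
Write `K^{i,j}(N)` for the strand of cohomological degree `i` and internal degree `j` of the Koszul
cohomology of `N` on `x₁, …, xₙ` (exponent one), graded so that `H^i_{S₊}(N)_j` is the colimit of the
analogous strands for the exponents `t`.

*Koszul cohomology computes regularity.* The Koszul complexes for the exponents `v`, `v + 1` and `1`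
of a single variable (the last shifted by `v`) form an exact triangle. Hence vanishing of `K^{i,j}`
for `i + j > ρ` propagates to all exponents (`Van.all`), and raising exponents is injective on a
strand once the strands to its left vanish (`cobound_of_push`). Applied to a nonzero `K^{i,j}` with
`i + j = ρ` maximal and `i` minimal, this shows `reg N = max {i + j | K^{i,j}(N) ≠ 0}` (`regVal_eq`),
with no finiteness hypothesis on `N`. Working with exponent one throughout replaces local
cohomology by a theory with honest long exact sequences and, for `N = S`, finitely generated strands
over `S₀`.

*Upper bound.* Put `ρ = reg S` and let `γ` be the largest value of `deg - q` over the generators of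
the `F_q`. Descending along the short exact sequences of syzygies, which end since the resolution
is finite, gives `reg M ≤ γ + ρ` (`uvan_Zf`). The same argument keeps track of the largest `i₀` with
`K^{i₀, ρ - i₀}(S) ≠ 0`: on the extremal line, only strands with `i ≤ i₀` may survive.

*Lower bound.* Suppose a generator of `F_q` attains `γ`. If `γ` is attained further to the left too,
a nonzero extremal strand of the syzygies moves along the connecting map (`attained_step`).
Otherwise, consider the strand of total degree `γ + q + ρ` with `i = i₀`. Were it zero in the
cokernel `M_q` of `F_{q+1} → F_q`, every cocycle supported on the generator would come, up to
coboundaries, from cocycles of `F_{q+1}`, because the obstruction lies in a strand with index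
`i₀ + 1` that vanishes by the choice of `i₀`. The relevant matrix entries have degree at most zero, so by
minimality they lie in the maximal ideal of `S₀` (`crit`), and Nakayama's lemma over `S₀` yields
`K^{i₀, ρ - i₀}(S) = 0`, a contradiction (`exists_not_mem`).

*Betti numbers.* The homology of `F ⊗ S/S₊` in degree `j` at `F_q` needs a generator of `F_q` of
degree `j`; conversely a generator attaining `γ` survives (`HNZ_of_max`). So `reg^S M = γ`
(`sSup_betti`).
-/

open Finset

section PaperRegularity

/-! ## Graded rings, graded modules, and a concrete (Koszul/Čech) model of graded local
cohomology, used to express the invariants `a_i(M)` and `reg(M)` of Castelnuovo–Mumford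
regularity theory. -/

/-- Degrees, with `−∞` (for vanishing modules) and `+∞`. -/
abbrev Deg : Type := WithBot (WithTop ℤ)

/-- The canonical inclusion of `ℤ` into `Deg`. -/
def Deg.of (j : ℤ) : Deg := ((j : WithTop ℤ) : Deg)

variable {S : Type} [CommRing S]

/-- `𝒜` is a (ℤ-indexed, nonnegatively supported) standard grading on the ring `S`:
`S = ⊕ 𝒜_i`, `1 ∈ 𝒜_0`, `𝒜_i · 𝒜_j ⊆ 𝒜_{i+j}`, `𝒜_i = 0` for `i < 0`, and `S` is
generated in degree one: `𝒜_{i+1} = 𝒜_1 · 𝒜_i`. -/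
structure IsStdGraded (𝒜 : ℤ → AddSubgroup S) : Prop where
  internal : DirectSum.IsInternal 𝒜
  one_mem : (1 : S) ∈ 𝒜 0
  mul_mem : ∀ {i j : ℤ} {a b : S}, a ∈ 𝒜 i → b ∈ 𝒜 j → a * b ∈ 𝒜 (i + j)
  bot_of_neg : ∀ i < (0 : ℤ), 𝒜 i = ⊥
  gen_one : ∀ i : ℤ, 0 ≤ i → ∀ a ∈ 𝒜 (i + 1),
    a ∈ AddSubgroup.closure {y : S | ∃ s ∈ 𝒜 1, ∃ b ∈ 𝒜 i, y = s * b}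

/-- `S` is a standard graded ring *over* `R₀` (via the algebra structure):
the degree-zero part is exactly the image of `R₀`. -/
def GradedOver (𝒜 : ℤ → AddSubgroup S) (R₀ : Type) [CommRing R₀] [Algebra R₀ S] : Prop :=
  Function.Injective (algebraMap R₀ S) ∧ (𝒜 0 : Set S) = Set.range (algebraMap R₀ S)

/-- `ℳ` is a grading on the `S`-module `M`, compatible with the grading `𝒜` of `S`. -/
structure IsGradedMod (𝒜 : ℤ → AddSubgroup S) {M : Type} [AddCommGroup M] [Module S M]
    (ℳ : ℤ → AddSubgroup M) : Prop where
  internal : DirectSum.IsInternal ℳ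
  smul_mem : ∀ {i j : ℤ} {s : S} {m : M}, s ∈ 𝒜 i → m ∈ ℳ j → s • m ∈ ℳ (i + j)

/-- `x : Fin n → S` is a family of degree-one elements generating `𝒜 1` (hence generating
the irrelevant ideal `S₊` up to radical). -/
def GensDegOne (𝒜 : ℤ → AddSubgroup S) {n : ℕ} (x : Fin n → S) : Prop :=
  (∀ i, x i ∈ 𝒜 1) ∧
    ∀ s ∈ 𝒜 1, s ∈ AddSubgroup.closure {y : S | ∃ r ∈ 𝒜 0, ∃ i, y = r * x i}

/-- The irrelevant ideal `S₊ = ⊕_{i>0} 𝒜_i` of a graded ring. -/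
def sPlus (𝒜 : ℤ → AddSubgroup S) : Ideal S :=
  Ideal.span {s : S | ∃ i : ℤ, 0 < i ∧ s ∈ 𝒜 i}

/-- The induced grading on a quotient module `M ⧸ P` (images of the graded pieces). -/
def qmPiece {M : Type} [AddCommGroup M] [Module S M] (P : Submodule S M)
    (ℳ : ℤ → AddSubgroup M) (j : ℤ) : AddSubgroup (M ⧸ P) :=
  AddSubgroup.map (P.mkQ).toAddMonoidHom (ℳ j)

section Koszul

variable {M : Type} [AddCommGroup M] [Module S M] {n : ℕ}

/-- Cochains of the (exponent `t`) Koszul cocomplex on `x_1^t, …, x_n^t` with values in `M`. -/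
abbrev KCochain (M : Type) (n i : ℕ) : Type := {T : Finset (Fin n) // T.card = i} → M

/-- The Koszul codifferential (for the sequence `x_1^t, …, x_n^t`). -/
noncomputable def kd (x : Fin n → S) (t i : ℕ) (z : KCochain M n i) : KCochain M n (i + 1) :=
  fun T => ∑ s ∈ T.1.attach,
    ((-1 : ℤ) ^ ((T.1.filter (fun a => a < s.1)).card)) •
      ((x s.1 ^ t) • z ⟨T.1.erase s.1, by
        rw [Finset.card_erase_of_mem s.2, T.2]; rfl⟩)

/-- The transition map from the exponent `t` Koszul cocomplex to the exponent `t + u` one. -/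
noncomputable def kpush (x : Fin n → S) (u i : ℕ) (z : KCochain M n i) : KCochain M n i :=
  fun T => (∏ s ∈ T.1, x s ^ u) • z T

/-- `z` is a coboundary in the exponent `t` Koszul cocomplex. -/
def kIsCobound (x : Fin n → S) (t : ℕ) : ∀ i, KCochain M n i → Prop
  | 0, z => z = 0
  | i + 1, z => ∃ w : KCochain M n i, kd x t i w = z

/-- `z` lies in the internal degree `j` strand of the exponent `t` Koszul cocomplex
(in cohomological degree `i`), for the grading `ℳ` of `M`. -/
def kStrand (ℳ : ℤ → AddSubgroup M) (t i : ℕ) (j : ℤ) (z : KCochain M n i) : Prop :=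
  ∀ T, z T ∈ ℳ (j + (t * i : ℕ))

/-- Nonvanishing of the degree `j` part of the `i`-th graded local cohomology module
`H^i_{S₊}(M)_j`, computed as the direct limit over `t` of the Koszul cohomologies of
`x_1^t, …, x_n^t`: there is a degree `j` cocycle whose class survives in the colimit. -/
def lcNZ (x : Fin n → S) (ℳ : ℤ → AddSubgroup M) (i : ℕ) (j : ℤ) : Prop :=
  ∃ (t : ℕ) (z : KCochain M n i), kStrand ℳ t i j z ∧ kd x t i z = 0 ∧
    ∀ u : ℕ, ¬ kIsCobound x (t + u) i (kpush x u i z)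

/-- `a_i(M)`: the top degree of the `i`-th local cohomology of `M` (`⊥` if it vanishes). -/
noncomputable def aVal (x : Fin n → S) (ℳ : ℤ → AddSubgroup M) (i : ℕ) : Deg :=
  sSup {d : Deg | ∃ j : ℤ, lcNZ x ℳ i j ∧ d = Deg.of j}

/-- The Castelnuovo–Mumford regularity `reg M = max_i (a_i(M) + i)`. -/
noncomputable def regVal (x : Fin n → S) (ℳ : ℤ → AddSubgroup M) : Deg :=
  sSup {d : Deg | ∃ (i : ℕ) (j : ℤ), lcNZ x ℳ i j ∧ d = Deg.of (j + i)}

end Koszul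

/-- A (bounded-below, homologically indexed) complex of finitely generated graded free
`S`-modules `F_i = ⊕_{a : Fin (r i)} S(-deg i a)`, recorded via its matrices: the entry
`mat i a b ∈ S` is the coefficient of the `b`-th basis vector of `F_i` in the image of the
`a`-th basis vector of `F_{i+1}`; entries are homogeneous of the appropriate degrees. -/
structure GFC (𝒜 : ℤ → AddSubgroup S) where
  r : ℕ → ℕ
  deg : ∀ i, Fin (r i) → ℤ
  mat : ∀ i, Fin (r (i + 1)) → Fin (r i) → S
  mat_mem : ∀ i a b, mat i a b ∈ 𝒜 (deg (i + 1) a - deg i b)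
  comp_eq_zero : ∀ i (a : Fin (r (i + 2))) (c : Fin (r i)),
    ∑ b, mat i b c * mat (i + 1) a b = 0

/-- A minimal graded free resolution of the graded `S`-module `M` (with grading `ℳ`):
a graded free complex `F_•` together with an augmentation `F_0 → M` which is surjective,
exact, and minimal (all entries of the differentials lie in the maximal graded ideal;
`m0` is the set of degree-zero elements lying in the maximal ideal of `S_0`). -/
structure MGFR (𝒜 : ℤ → AddSubgroup S) {M : Type} [AddCommGroup M] [Module S M]
    (ℳ : ℤ → AddSubgroup M) (m0 : Set S) extends GFC 𝒜 where
  augm : Fin (r 0) → M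
  augm_mem : ∀ a, augm a ∈ ℳ (deg 0 a)
  augm_surj : ∀ m : M, ∃ z : Fin (r 0) → S, ∑ a, z a • augm a = m
  exact_zero : ∀ z : Fin (r 0) → S, (∑ a, z a • augm a = 0) ↔
    ∃ w : Fin (r 1) → S, (fun b => ∑ a, mat 0 a b * w a) = z
  exact_succ : ∀ i (z : Fin (r (i + 1)) → S),
    ((fun b => ∑ a, mat i a b * z a) = (0 : Fin (r i) → S)) ↔
      ∃ w : Fin (r (i + 2)) → S, (fun c => ∑ a, mat (i + 1) a c * w a) = z
  minimal : ∀ i a b, deg (i + 1) a = deg i b → mat i a b ∈ m0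

namespace GFC

variable {𝒜 : ℤ → AddSubgroup S} (F : GFC 𝒜)
variable (N : Type) [AddCommGroup N] [Module S N]

/-- The complex `F_• ⊗_S N`, in homological degree `i`. -/
noncomputable def tmap (i : ℕ) : ((Fin (F.r (i + 1)) → N) →ₗ[S] (Fin (F.r i) → N)) where
  toFun z := fun b => ∑ a, F.mat i a b • z a
  map_add' y z := by
    funext b
    simp only [Pi.add_apply, smul_add]
    exact Finset.sum_add_distrib
  map_smul' s z := by
    funext b
    simp only [Pi.smul_apply, RingHom.id_apply]
    rw [Finset.smul_sum]
    exact Finset.sum_congr rfl fun a _ => smul_comm (F.mat i a b) s (z a)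

/-- Cycles of the complex `F_• ⊗_S N`. -/
noncomputable def cyc : ∀ i : ℕ, Submodule S (Fin (F.r i) → N)
  | 0 => ⊤
  | i + 1 => LinearMap.ker (F.tmap N i)

/-- Boundaries of the complex `F_• ⊗_S N`. -/
noncomputable def bdry (i : ℕ) : Submodule S (Fin (F.r i) → N) :=
  LinearMap.range (F.tmap N i)

/-- The homology `H_i(F_• ⊗_S N)` (e.g. `Tor_i^S(M, N)` when `F` is a resolution of `M`). -/
noncomputable def H (i : ℕ) : Type :=
  (F.cyc N i) ⧸ (Submodule.comap (F.cyc N i).subtype (F.bdry N i))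

noncomputable instance (i : ℕ) : AddCommGroup (F.H N i) :=
  inferInstanceAs (AddCommGroup ((F.cyc N i) ⧸ (Submodule.comap (F.cyc N i).subtype (F.bdry N i))))

noncomputable instance (i : ℕ) : Module S (F.H N i) :=
  inferInstanceAs (Module S ((F.cyc N i) ⧸ (Submodule.comap (F.cyc N i).subtype (F.bdry N i))))

/-- The internal degree `j` part of `F_i ⊗_S N`, for a grading `𝒩` of `N`. -/
def fpiece (𝒩 : ℤ → AddSubgroup N) (i : ℕ) (j : ℤ) : AddSubgroup (Fin (F.r i) → N) :=
  AddSubgroup.pi Set.univ (fun a => 𝒩 (j - F.deg i a))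

/-- The induced grading on the homology `H_i(F_• ⊗_S N)`. -/
noncomputable def Hpiece (𝒩 : ℤ → AddSubgroup N) (i : ℕ) (j : ℤ) : AddSubgroup (F.H N i) :=
  AddSubgroup.map
    ((Submodule.mkQ (Submodule.comap (F.cyc N i).subtype (F.bdry N i))).toAddMonoidHom)
    (AddSubgroup.comap ((F.cyc N i).subtype).toAddMonoidHom (F.fpiece N 𝒩 i j))

/-- Nonvanishing of the degree `j` part of `H_i(F_• ⊗_S N)` (e.g. of `Tor_i^S(M, N)_j`). -/
noncomputable def HNZ (𝒩 : ℤ → AddSubgroup N) (i : ℕ) (j : ℤ) : Prop :=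
  F.Hpiece N 𝒩 i j ≠ ⊥

end GFC

/-- The dimension of the support of an `S`-module. -/
noncomputable def mdim (S : Type) [CommRing S] (X : Type) [AddCommGroup X] [Module S X] :
    WithBot (WithTop ℕ) :=
  ringKrullDim (S ⧸ Module.annihilator S X)

end PaperRegularity

namespace RegKoszul

/-! ### Exterior multiplication and contraction on cochains -/

section Algebra

variable {S : Type} [CommRing S] {N : Type} [AddCommGroup N] [Module S N] {n : ℕ}

/-- Cochains of all cohomological degrees at once: a family of elements of `N` indexed by the
subsets of `Fin n`, i.e. an element of `N ⊗ ⋀ ℤⁿ`. -/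
abbrev Coch (n : ℕ) (N : Type) : Type := Finset (Fin n) → N

/-- The sign `(-1) ^ #{a ∈ T | a < s}`. -/
def sgn (s : Fin n) (T : Finset (Fin n)) : ℤ := (-1) ^ (T.filter (fun a => a < s)).card

lemma sgn_mul_self (s : Fin n) (T : Finset (Fin n)) : sgn s T * sgn s T = 1 := by
  unfold sgn
  rw [← mul_pow]
  simp

lemma sgn_insert (s : Fin n) {t : Fin n} {T : Finset (Fin n)} (h : t ∉ T) :
    sgn s (insert t T) = if t < s then - sgn s T else sgn s T := by
  unfold sgn
  rw [Finset.filter_insert]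
  split_ifs with hts
  · rw [Finset.card_insert_of_notMem (by simp [h]), pow_succ]; ring
  · rfl

lemma sgn_erase (s : Fin n) {t : Fin n} {T : Finset (Fin n)} (h : t ∈ T) :
    sgn s (T.erase t) = if t < s then - sgn s T else sgn s T := by
  have := sgn_insert s (Finset.notMem_erase t T)
  rw [Finset.insert_erase h] at this
  rw [this]
  split_ifs <;> simp

variable (S) in
/-- Exterior multiplication by the `k`-th basis vector. -/
def wedge (k : Fin n) : Coch n N →ₗ[S] Coch n N where
  toFun z T := if k ∈ T then sgn k T • z (T.erase k) else 0
  map_add' y z := by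
    funext T; by_cases h : k ∈ T <;> simp [h]
  map_smul' s z := by
    funext T; by_cases h : k ∈ T <;> simp [h, smul_comm s]

variable (S) in
/-- Contraction against the `k`-th dual basis vector. -/
def contr (k : Fin n) : Coch n N →ₗ[S] Coch n N where
  toFun z T := if k ∈ T then 0 else sgn k T • z (insert k T)
  map_add' y z := by
    funext T; by_cases h : k ∈ T <;> simp [h]
  map_smul' s z := by
    funext T; by_cases h : k ∈ T <;> simp [h, smul_comm s]

lemma wedge_apply (k : Fin n) (z : Coch n N) (T : Finset (Fin n)) :
    wedge S k z T = if k ∈ T then sgn k T • z (T.erase k) else 0 := rfl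

lemma contr_apply (k : Fin n) (z : Coch n N) (T : Finset (Fin n)) :
    contr S k z T = if k ∈ T then 0 else sgn k T • z (insert k T) := rfl

lemma wedge_wedge_self (k : Fin n) (z : Coch n N) : wedge S k (wedge S k z) = 0 := by
  funext T
  simp [wedge_apply]

lemma contr_wedge_apply (k : Fin n) (z : Coch n N) (T : Finset (Fin n)) :
    contr S k (wedge S k z) T = if k ∈ T then 0 else z T := by
  rw [contr_apply]
  split_ifs with h
  · rfl
  · rw [wedge_apply, if_pos (Finset.mem_insert_self _ _), Finset.erase_insert h, sgn_insert _ h,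
      if_neg (lt_irrefl k), smul_smul, sgn_mul_self, one_smul]

lemma wedge_contr_apply (k : Fin n) (z : Coch n N) (T : Finset (Fin n)) :
    wedge S k (contr S k z) T = if k ∈ T then z T else 0 := by
  rw [wedge_apply]
  split_ifs with h
  · rw [contr_apply, if_neg (Finset.notMem_erase _ _), Finset.insert_erase h, sgn_erase _ h,
      if_neg (lt_irrefl k), smul_smul, sgn_mul_self, one_smul]
  · rfl

lemma contr_contr_self (k : Fin n) (z : Coch n N) : contr S k (contr S k z) = 0 := by
  funext T
  simp [contr_apply]

lemma contr_wedge_add (k : Fin n) (z : Coch n N) :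
    contr S k (wedge S k z) + wedge S k (contr S k z) = z := by
  funext T
  rw [Pi.add_apply, contr_wedge_apply, wedge_contr_apply]
  split_ifs <;> simp

lemma wedge_contr_wedge (k : Fin n) (z : Coch n N) :
    wedge S k (contr S k (wedge S k z)) = wedge S k z := by
  funext T
  rw [wedge_contr_apply]
  split_ifs with h
  · rfl
  · rw [wedge_apply, if_neg h]

lemma wedge_wedge_comm {k l : Fin n} (hkl : k ≠ l) (z : Coch n N) :
    wedge S k (wedge S l z) = - wedge S l (wedge S k z) := by
  funext T
  simp only [wedge_apply, Pi.neg_apply, Finset.mem_erase]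
  by_cases hk : k ∈ T
  · by_cases hl : l ∈ T
    · rcases lt_or_gt_of_ne hkl with h | h
      · simp [hk, hl, hkl, hkl.symm, sgn_erase, h, h.not_gt, smul_smul, Finset.erase_right_comm,
          mul_comm]
      · simp [hk, hl, hkl, hkl.symm, sgn_erase, h, h.not_gt, smul_smul, Finset.erase_right_comm,
          mul_comm]
    · simp [hk, hl]
  · simp [hk]

lemma contr_wedge_comm {k l : Fin n} (hkl : k ≠ l) (z : Coch n N) :
    contr S k (wedge S l z) = - wedge S l (contr S k z) := by
  funext T
  simp only [wedge_apply, contr_apply, Pi.neg_apply, Finset.mem_erase, Finset.mem_insert]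
  by_cases hk : k ∈ T
  · simp [hk, hkl]
  · by_cases hl : l ∈ T
    · rw [Finset.erase_insert_of_ne hkl]
      rcases lt_or_gt_of_ne hkl with h | h
      · simp [hk, hl, sgn_erase, sgn_insert, h, h.not_gt, smul_smul, mul_comm]
      · simp [hk, hl, sgn_erase, sgn_insert, h, h.not_gt, smul_smul, mul_comm]
    · simp [hk, hl, hkl.symm]

/-- The part of the Koszul differential on `x₁ ^ e₁, …, xₙ ^ eₙ` involving the indices in `A`. -/
def difOn (x : Fin n → S) (e : Fin n → ℕ) (A : Finset (Fin n)) : Coch n N →ₗ[S] Coch n N :=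
  ∑ s ∈ A, (x s ^ e s) • wedge S s

/-- The Koszul codifferential on `x₁ ^ e₁, …, xₙ ^ eₙ`, with independent exponents. -/
def dif (x : Fin n → S) (e : Fin n → ℕ) : Coch n N →ₗ[S] Coch n N := difOn x e Finset.univ

lemma difOn_apply (x : Fin n → S) (e : Fin n → ℕ) (A : Finset (Fin n)) (z : Coch n N) :
    difOn x e A z = ∑ s ∈ A, (x s ^ e s) • wedge S s z := by
  simp [difOn, LinearMap.sum_apply]

lemma difOn_insert (x : Fin n → S) (e : Fin n → ℕ) {A : Finset (Fin n)} {k : Fin n} (h : k ∉ A)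
    (z : Coch n N) : difOn x e (insert k A) z = x k ^ e k • wedge S k z + difOn x e A z := by
  rw [difOn_apply, difOn_apply, Finset.sum_insert h]

lemma difOn_wedge (x : Fin n → S) (e : Fin n → ℕ) {A : Finset (Fin n)} {k : Fin n} (h : k ∉ A)
    (z : Coch n N) : difOn x e A (wedge S k z) = - wedge S k (difOn x e A z) := by
  simp only [difOn_apply, map_sum, map_smul, ← Finset.sum_neg_distrib]
  refine Finset.sum_congr rfl fun s hs => ?_
  rw [wedge_wedge_comm (by rintro rfl; exact h hs), smul_neg]

lemma difOn_contr (x : Fin n → S) (e : Fin n → ℕ) {A : Finset (Fin n)} {k : Fin n} (h : k ∉ A)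
    (z : Coch n N) : difOn x e A (contr S k z) = - contr S k (difOn x e A z) := by
  simp only [difOn_apply, map_sum, map_smul, ← Finset.sum_neg_distrib]
  refine Finset.sum_congr rfl fun s hs => ?_
  rw [contr_wedge_comm (by rintro rfl; exact h hs), smul_neg, neg_neg]

lemma difOn_difOn (x : Fin n → S) (e : Fin n → ℕ) (A : Finset (Fin n)) (z : Coch n N) :
    difOn x e A (difOn x e A z) = 0 := by
  induction A using Finset.induction_on with
  | empty => simp [difOn_apply]
  | insert k A hk ih =>
    rw [difOn_insert _ _ hk, difOn_insert _ _ hk, map_add, map_add, map_smul, map_smul, ih,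
      wedge_wedge_self, difOn_wedge _ _ hk]
    simp

lemma dif_dif (x : Fin n → S) (e : Fin n → ℕ) (z : Coch n N) : dif x e (dif x e z) = 0 :=
  difOn_difOn x e _ z

lemma dif_update (x : Fin n → S) (e : Fin n → ℕ) (k : Fin n) (v : ℕ) (z : Coch n N) :
    dif x (Function.update e k v) z =
      x k ^ v • wedge S k z + difOn x e (Finset.univ.erase k) z := by
  have h : (Finset.univ : Finset (Fin n)) = insert k (Finset.univ.erase k) := by simp
  rw [dif, h, difOn_insert _ _ (Finset.notMem_erase _ _), Function.update_self]
  congr 1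
  rw [difOn_apply, difOn_apply, Finset.erase_insert (Finset.notMem_erase _ _)]
  refine Finset.sum_congr rfl fun s hs => ?_
  rw [Function.update_of_ne (Finset.ne_of_mem_erase hs)]

/-- Contraction is a homotopy for multiplication by `x k ^ e k`, which therefore annihilates
Koszul cohomology. -/
lemma dif_contr (x : Fin n → S) (e : Fin n → ℕ) (k : Fin n) (z : Coch n N) :
    dif x e (contr S k z) + contr S k (dif x e z) = x k ^ e k • z := by
  have h := fun z : Coch n N => dif_update x e k (e k) z
  rw [Function.update_eq_self] at h
  rw [h, h, difOn_contr _ _ (Finset.notMem_erase _ _), map_add, map_smul]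
  nth_rewrite 5 [← contr_wedge_add (S := S) k z]
  module

lemma dif_apply (x : Fin n → S) (e : Fin n → ℕ) (z : Coch n N) (T : Finset (Fin n)) :
    dif x e z T = ∑ s ∈ T, sgn s T • (x s ^ e s • z (T.erase s)) := by
  rw [dif, difOn_apply, Finset.sum_apply, ← Finset.sum_subset (Finset.subset_univ T)]
  · refine Finset.sum_congr rfl fun s hs => ?_
    rw [Pi.smul_apply, wedge_apply, if_pos hs, smul_comm]
  · intro s _ hs
    rw [Pi.smul_apply, wedge_apply, if_neg hs, smul_zero]

/-! ### Graded strands -/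

/-- The strand of internal degree `j` and cohomological degree `i` of the Koszul cocomplex on
`x₁ ^ e₁, …, xₙ ^ eₙ` with coefficients in the family `𝒩`. Integral `i` makes the cochains of
cohomological degree `-1` vanish automatically. -/
def Str (e : Fin n → ℕ) (𝒩 : ℤ → AddSubgroup N) (i j : ℤ) : AddSubgroup (Coch n N) where
  carrier := {z | ∀ T, z T ∈ 𝒩 (j + (∑ s ∈ T, e s : ℕ)) ∧ ((T.card : ℤ) ≠ i → z T = 0)}
  zero_mem' T := ⟨zero_mem _, fun _ => rfl⟩
  add_mem' hy hz T := ⟨add_mem (hy T).1 (hz T).1, fun h => by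
    simp [(hy T).2 h, (hz T).2 h]⟩
  neg_mem' hy T := ⟨neg_mem (hy T).1, fun h => by simp [(hy T).2 h]⟩

/-- Vanishing of the strand `(i, j)` of Koszul cohomology. -/
def Van (x : Fin n → S) (e : Fin n → ℕ) (𝒩 : ℤ → AddSubgroup N) (i j : ℤ) : Prop :=
  ∀ z ∈ Str e 𝒩 i j, dif x e z = 0 → ∃ w ∈ Str e 𝒩 (i - 1) j, dif x e w = z

/-- The family `𝒩` is stable under the `x k`, acting with degree one. -/
def Stable (x : Fin n → S) (𝒩 : ℤ → AddSubgroup N) : Prop :=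
  ∀ k j, ∀ m ∈ 𝒩 j, x k • m ∈ 𝒩 (j + 1)

lemma Stable.pow {x : Fin n → S} {𝒩 : ℤ → AddSubgroup N} (h : Stable x 𝒩) (k : Fin n) (v : ℕ)
    {j : ℤ} {m : N} (hm : m ∈ 𝒩 j) : x k ^ v • m ∈ 𝒩 (j + v) := by
  induction v with
  | zero => simpa using hm
  | succ v ih =>
    rw [pow_succ', mul_smul]
    have := h k _ _ ih
    push_cast
    rwa [← add_assoc]

lemma Str.eq_zero {e : Fin n → ℕ} {𝒩 : ℤ → AddSubgroup N} {i j : ℤ} (hi : i < 0 ∨ n < i)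
    {z : Coch n N} (hz : z ∈ Str e 𝒩 i j) : z = 0 := by
  funext T
  refine (hz T).2 ?_
  have := Finset.card_le_univ T
  simp only [Fintype.card_fin] at this
  omega

lemma Van.of_range {x : Fin n → S} {e : Fin n → ℕ} {𝒩 : ℤ → AddSubgroup N} {i j : ℤ}
    (hi : i < 0 ∨ n < i) : Van x e 𝒩 i j := fun z hz _ =>
  ⟨0, zero_mem _, by rw [Str.eq_zero hi hz, map_zero]⟩

lemma smul_mem_str {x : Fin n → S} {e : Fin n → ℕ} {𝒩 : ℤ → AddSubgroup N} (h : Stable x 𝒩)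
    {i j j' : ℤ} (k : Fin n) (v : ℕ) (hj : j' = j + v) {z : Coch n N} (hz : z ∈ Str e 𝒩 i j) :
    x k ^ v • z ∈ Str e 𝒩 i j' := by
  subst hj
  intro T
  refine ⟨?_, fun hT => by rw [Pi.smul_apply, (hz T).2 hT, smul_zero]⟩
  have := h.pow k v (hz T).1
  rw [Pi.smul_apply]
  convert this using 2
  ring

/-- Exterior multiplication on strands: only the values away from `k` matter, so the exponent of
`x k` may be changed freely, up to a shift. -/
lemma wedge_mem_str {e : Fin n → ℕ} {𝒩 : ℤ → AddSubgroup N} {i j i' j' : ℤ} {k : Fin n}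
    (v v' : ℕ) (hi : i' = i + 1) (hj : j' = j - v') {z : Coch n N}
    (hz : z ∈ Str (Function.update e k v) 𝒩 i j) :
    wedge S k z ∈ Str (Function.update e k v') 𝒩 i' j' := by
  intro T
  rw [wedge_apply]
  split_ifs with h
  · have h1 := hz (T.erase k)
    constructor
    · refine AddSubgroup.zsmul_mem _ ?_ _
      convert h1.1 using 2
      rw [Finset.sum_update_of_mem h, Finset.sum_update_of_notMem (Finset.notMem_erase k T),
        Finset.sdiff_singleton_eq_erase]
      push_cast
      linarith
    · intro hT
      rw [h1.2, smul_zero]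
      rw [← Finset.card_erase_add_one h] at hT
      push_cast at hT
      omega
  · exact ⟨zero_mem _, fun _ => rfl⟩

lemma contr_mem_str {e : Fin n → ℕ} {𝒩 : ℤ → AddSubgroup N} {i j i' j' : ℤ} {k : Fin n}
    (v v' : ℕ) (hi : i' = i - 1) (hj : j' = j + v) {z : Coch n N}
    (hz : z ∈ Str (Function.update e k v) 𝒩 i j) :
    contr S k z ∈ Str (Function.update e k v') 𝒩 i' j' := by
  intro T
  rw [contr_apply]
  split_ifs with h
  · exact ⟨zero_mem _, fun _ => rfl⟩
  · have h1 := hz (insert k T)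
    constructor
    · refine AddSubgroup.zsmul_mem _ ?_ _
      convert h1.1 using 2
      rw [Finset.sum_update_of_mem (Finset.mem_insert_self _ _),
        Finset.sum_update_of_notMem h, Finset.sdiff_singleton_eq_erase, Finset.erase_insert h]
      push_cast
      linarith
    · intro hT
      rw [h1.2, smul_zero]
      rw [Finset.card_insert_of_notMem h]
      push_cast
      omega

lemma dif_mem_str {x : Fin n → S} {e : Fin n → ℕ} {𝒩 : ℤ → AddSubgroup N} (h : Stable x 𝒩)
    {i j i' : ℤ} (hi : i' = i + 1) {z : Coch n N} (hz : z ∈ Str e 𝒩 i j) :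
    dif x e z ∈ Str e 𝒩 i' j := by
  rw [dif, difOn_apply]
  refine AddSubgroup.sum_mem _ fun s _ => ?_
  refine smul_mem_str h s (e s) (j := j - e s) (by ring) ?_
  have := wedge_mem_str (S := S) (e := e) (k := s) (e s) (e s) hi rfl (z := z)
    (by rwa [Function.update_eq_self])
  rwa [Function.update_eq_self] at this

/-! ### Changing one exponent -/

/-- The push-forward raising the exponent vector by `g`. -/
def push (x : Fin n → S) (g : Fin n → ℕ) (z : Coch n N) : Coch n N :=
  fun T => (∏ s ∈ T, x s ^ g s) • z T

lemma push_dif (x : Fin n → S) (e g : Fin n → ℕ) (z : Coch n N) :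
    dif x (e + g) (push x g z) = push x g (dif x e z) := by
  funext T
  rw [push, dif_apply, dif_apply, Finset.smul_sum]
  refine Finset.sum_congr rfl fun s hs => ?_
  rw [push, smul_comm _ (sgn s T), ← Finset.mul_prod_erase T _ hs, smul_smul, smul_smul,
    Pi.add_apply, pow_add]
  congr 2
  ring

lemma push_mem_str {x : Fin n → S} {e g : Fin n → ℕ} {𝒩 : ℤ → AddSubgroup N} (h : Stable x 𝒩)
    {i j : ℤ} {z : Coch n N} (hz : z ∈ Str e 𝒩 i j) : push x g z ∈ Str (e + g) 𝒩 i j := by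
  intro T
  refine ⟨?_, fun hT => by rw [push, (hz T).2 hT, smul_zero]⟩
  have key : ∀ (A : Finset (Fin n)) (l : ℤ), ∀ m ∈ 𝒩 l,
      (∏ s ∈ A, x s ^ g s) • m ∈ 𝒩 (l + (∑ s ∈ A, g s : ℕ)) := by
    intro A
    induction A using Finset.induction_on with
    | empty => intro l m hm; simpa using hm
    | insert k A hk ih =>
      intro l m hm
      rw [Finset.prod_insert hk, Finset.sum_insert hk, mul_smul]
      convert h.pow k (g k) (ih l m hm) using 2
      push_cast
      ring
  rw [push]
  convert key T _ _ (hz T).1 using 2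
  simp only [Pi.add_apply, Finset.sum_add_distrib]
  push_cast
  ring

/-- The push-forward raising the exponent of `x k` by one, in terms of `wedge` and `contr`. -/
lemma push_single (x : Fin n → S) (k : Fin n) (z : Coch n N) :
    push x (Pi.single k 1) z =
      contr S k (wedge S k z) + x k • wedge S k (contr S k z) := by
  funext T
  have h : ∏ s ∈ T, x s ^ (Pi.single k 1 : Fin n → ℕ) s = if k ∈ T then x k else 1 := by
    have : ∀ s, x s ^ (Pi.single k 1 : Fin n → ℕ) s = if k = s then x s else 1 := by
      intro s
      by_cases hs : k = s
      · subst hs; simp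
      · rw [Pi.single_eq_of_ne (Ne.symm hs), if_neg hs, pow_zero]
    simp_rw [this]
    exact Finset.prod_ite_eq T k x
  rw [push, h, Pi.add_apply, Pi.smul_apply, contr_wedge_apply, wedge_contr_apply]
  split_ifs <;> simp

lemma update_add_single (e : Fin n → ℕ) (k : Fin n) (v : ℕ) :
    Function.update e k v + Pi.single k 1 = Function.update e k (v + 1) := by
  funext s
  by_cases h : s = k
  · subst h; simp
  · simp [h]

/-- Vanishing passes from exponent `v` to `v + 1`. The complexes with exponent `v`, `v + 1` and `1`
at `k`, the last one shifted by `v`, form an exact triangle, and this is the middle term of the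
long exact sequence. -/
lemma Van.update_succ {x : Fin n → S} {e : Fin n → ℕ} {𝒩 : ℤ → AddSubgroup N} (h : Stable x 𝒩)
    {i j : ℤ} (k : Fin n) (v : ℕ) (h0 : Van x (Function.update e k v) 𝒩 i j)
    (h1 : Van x (Function.update e k 1) 𝒩 i (j + v)) :
    Van x (Function.update e k (v + 1)) 𝒩 i j := by
  intro z hz hdz
  have hk : k ∉ Finset.univ.erase k := Finset.notMem_erase _ _
  rw [dif_update] at hdz
  have hD : wedge S k (difOn x e (Finset.univ.erase k) z) = 0 := by
    have := congrArg (wedge S k) hdz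
    simpa [wedge_wedge_self] using this
  -- the image of `z` in the exponent-one complex: the component away from `k` is multiplied by
  -- `x k ^ v`, the one along `k` is kept
  obtain ⟨w, hw, hdw⟩ := h1 (x k ^ v • contr S k (wedge S k z) + wedge S k (contr S k z))
    (add_mem (smul_mem_str h k v rfl (contr_mem_str 1 1 (by ring) (by ring)
        (wedge_mem_str (j' := j - 1) (v + 1) 1 rfl (by simp) hz)))
      (wedge_mem_str 1 1 (by ring) (by push_cast; ring)
        (contr_mem_str (v + 1) 1 rfl rfl hz)))
    (by
      rw [dif_update]
      have h2 := congrArg (fun y => wedge S k (contr S k y)) hdz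
      simp only [map_add, map_smul, map_zero, wedge_contr_wedge] at h2
      simp only [map_add, map_smul, difOn_wedge _ _ hk, difOn_contr _ _ hk, hD, map_neg,
        wedge_contr_wedge, wedge_wedge_self, map_zero]
      linear_combination (norm := module) h2)
  rw [dif_update] at hdw
  -- the component of `hdw` away from `k`
  have e1 : x k ^ v • contr S k (wedge S k z) =
      difOn x e (Finset.univ.erase k) (contr S k (wedge S k w)) := by
    have h2 := congrArg (fun y => contr S k (wedge S k y)) hdw
    simp only [map_add, map_smul, wedge_wedge_self, wedge_contr_wedge, smul_zero,
      zero_add, add_zero] at h2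
    rw [difOn_contr _ _ hk, difOn_wedge _ _ hk, map_neg, neg_neg, h2]
  -- the component of `hdw` along `k`
  have e2 : wedge S k (contr S k z) =
      difOn x e (Finset.univ.erase k) (wedge S k (contr S k w)) + x k • wedge S k w := by
    have h2 := congrArg (fun y => wedge S k (contr S k y)) hdw
    simp only [map_add, map_smul, wedge_contr_wedge, contr_contr_self, smul_zero, zero_add, pow_one] at h2
    rw [difOn_wedge _ _ hk, difOn_contr _ _ hk, map_neg, neg_neg, add_comm, h2]
  -- correcting `z` by `w` gives a cocycle that comes from exponent `v`
  obtain ⟨u, hu, hdu⟩ := h0 (contr S k (wedge S k z) + wedge S k w)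
    (add_mem (contr_mem_str (j := j - 1) 1 v (by ring) (by ring)
        (wedge_mem_str (v + 1) 1 rfl rfl hz))
      (wedge_mem_str 1 v (by ring) (by ring) hw))
    (by
      rw [dif_update]
      have h2 := congrArg (wedge S k) e1
      simp only [map_smul, wedge_contr_wedge, difOn_contr _ _ hk, difOn_wedge _ _ hk, map_neg,
        neg_neg] at h2
      simp only [map_add, difOn_wedge _ _ hk, difOn_contr _ _ hk, hD, map_neg,
        wedge_contr_wedge, wedge_wedge_self, map_zero]
      linear_combination (norm := module) h2)
  refine ⟨wedge S k (contr S k w) + push x (Pi.single k 1) u, add_mem ?_ ?_, ?_⟩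
  · exact wedge_mem_str (i := i - 1 - 1) (j := j + v + 1) 1 (v + 1) (by ring) (by push_cast; ring)
      (contr_mem_str 1 1 rfl (by push_cast; ring) hw)
  · have := push_mem_str (g := Pi.single k 1) h hu
    rwa [update_add_single] at this
  · rw [map_add, ← update_add_single, push_dif, hdu, update_add_single, dif_update, push_single]
    simp only [map_add, wedge_wedge_self, wedge_contr_wedge, map_zero, smul_zero, zero_add]
    have h2 := contr_wedge_add (S := S) k z
    simp only [contr_contr_self, map_zero, zero_add, add_zero]
    linear_combination (norm := module) h2 - e2

/-- Injectivity of the map on cohomology raising one exponent, from the term of the long exact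
sequence that precedes it. -/
lemma cobound_of_push_single {x : Fin n → S} {e : Fin n → ℕ} {𝒩 : ℤ → AddSubgroup N}
    (h : Stable x 𝒩) {i j : ℤ} (k : Fin n) (v : ℕ)
    (h1 : Van x (Function.update e k 1) 𝒩 (i - 1) (j + v)) {z w : Coch n N}
    (hz : z ∈ Str (Function.update e k v) 𝒩 i j) (hdz : dif x (Function.update e k v) z = 0)
    (hw : w ∈ Str (Function.update e k (v + 1)) 𝒩 (i - 1) j)
    (hdw : dif x (Function.update e k (v + 1)) w = push x (Pi.single k 1) z) :
    ∃ w ∈ Str (Function.update e k v) 𝒩 (i - 1) j, dif x (Function.update e k v) w = z := by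
  have hk : k ∉ Finset.univ.erase k := Finset.notMem_erase _ _
  rw [push_single, dif_update] at hdw
  rw [dif_update] at hdz
  have e1 : contr S k (wedge S k z) =
      contr S k (wedge S k (difOn x e (Finset.univ.erase k) w)) := by
    have h2 := congrArg (fun y => contr S k (wedge S k y)) hdw
    simp only [map_add, map_smul, wedge_wedge_self, wedge_contr_wedge, smul_zero,
      zero_add, add_zero] at h2
    exact h2.symm
  have e2 : x k • wedge S k (contr S k z) = x k ^ (v + 1) • wedge S k w +
      wedge S k (contr S k (difOn x e (Finset.univ.erase k) w)) := by
    have h2 := congrArg (fun y => wedge S k (contr S k y)) hdw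
    simp only [map_add, map_smul, wedge_contr_wedge, contr_contr_self, zero_add] at h2
    exact h2.symm
  have e3 : x k ^ v • contr S k (wedge S k z) +
      contr S k (difOn x e (Finset.univ.erase k) z) = 0 := by
    have h2 := congrArg (contr S k) hdz
    simpa using h2
  -- a cocycle of the exponent-one complex whose connecting image is the class of `z`
  obtain ⟨u, hu, hdu⟩ := h1
    (wedge S k (contr S k w) + x k ^ v • contr S k (wedge S k w) - contr S k z)
    (sub_mem (add_mem
      (wedge_mem_str 1 1 (by ring) (by push_cast; ring) (contr_mem_str (v + 1) 1 rfl rfl hw))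
      (smul_mem_str h k v rfl (contr_mem_str (j := j - 1) 1 1 (by ring) (by ring)
        (wedge_mem_str (v + 1) 1 rfl rfl hw))))
      (contr_mem_str v 1 rfl rfl hz))
    (by
      rw [dif_update]
      simp only [map_add, map_sub, map_smul, difOn_wedge _ _ hk, difOn_contr _ _ hk, map_neg,
        wedge_contr_wedge, wedge_wedge_self]
      rw [← e1]
      linear_combination (norm := module) e3 - e2)
  rw [dif_update] at hdu
  have e4 : x k ^ v • contr S k (wedge S k w) - contr S k z =
      contr S k (wedge S k (difOn x e (Finset.univ.erase k) u)) := by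
    have h2 := congrArg (fun y => contr S k (wedge S k y)) hdu
    have h3 := contr_wedge_add (S := S) k (contr S k z)
    rw [contr_contr_self, map_zero, add_zero] at h3
    simp only [map_add, map_sub, map_smul, wedge_contr_wedge, wedge_wedge_self, smul_zero,
      zero_add, h3] at h2
    exact h2.symm
  refine ⟨contr S k (wedge S k w) + wedge S k u, add_mem ?_ ?_, ?_⟩
  · exact contr_mem_str (j := j - 1) 1 v (by ring) (by ring) (wedge_mem_str (v + 1) 1 rfl rfl hw)
  · exact wedge_mem_str 1 v (by ring) (by ring) hu
  · rw [dif_update]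
    have h2 := congrArg (wedge S k) e4
    simp only [map_sub, map_smul, wedge_contr_wedge] at h2
    rw [← contr_wedge_add (S := S) k z, e1]
    simp only [map_add, difOn_wedge _ _ hk, difOn_contr _ _ hk, map_neg,
        wedge_contr_wedge, wedge_wedge_self]
    linear_combination (norm := module) h2

/-! ### From exponent one to all exponents -/

/-- If exponent-one Koszul cohomology vanishes on a set `Q` of strands closed under raising the
internal degree, so does the Koszul cohomology for all positive exponents. -/
lemma Van.all {x : Fin n → S} {𝒩 : ℤ → AddSubgroup N} (h : Stable x 𝒩) {Q : ℤ → ℤ → Prop}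
    (hQ : ∀ i j (l : ℕ), Q i j → Q i (j + l)) (h1 : ∀ i j, Q i j → Van x 1 𝒩 i j)
    (e : Fin n → ℕ) (he : ∀ k, 1 ≤ e k) : ∀ i j, Q i j → Van x e 𝒩 i j := by
  induction hN : ∑ k, e k using Nat.strong_induction_on generalizing e with
  | _ N ih =>
  intro i j hij
  by_cases hone : e = 1
  · subst hone; exact h1 i j hij
  · obtain ⟨k, hk⟩ : ∃ k, 2 ≤ e k := by
      by_contra! hcon
      exact hone (funext fun k => by have := he k; have := hcon k; simp; omega)
    obtain ⟨v, hv⟩ : ∃ v, e k = v + 1 := ⟨e k - 1, by omega⟩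
    have hlt : ∀ a, a < e k → ∑ s, Function.update e k a s < N := by
      intro a ha
      rw [← hN]
      refine Finset.sum_lt_sum (fun s _ => ?_) ⟨k, Finset.mem_univ _, by simpa using ha⟩
      by_cases hs : s = k
      · subst hs; simpa using ha.le
      · simp [hs]
    have hpos : ∀ a, 1 ≤ a → ∀ s, 1 ≤ Function.update e k a s := by
      intro a ha s
      by_cases hs : s = k
      · subst hs; simpa using ha
      · simpa [hs] using he s
    have := Van.update_succ (e := e) (i := i) (j := j) h k v
      (ih _ (hlt v (by omega)) _ (hpos v (by omega)) rfl i j hij)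
      (ih _ (hlt 1 (by omega)) _ (hpos 1 le_rfl) rfl i _ (hQ i j v hij))
    rwa [← hv, Function.update_eq_self] at this

/-- If the cohomology one step to the left vanishes in all larger internal degrees, then raising
exponents is injective on cohomology. -/
lemma cobound_of_push {x : Fin n → S} {𝒩 : ℤ → AddSubgroup N} (h : Stable x 𝒩) {i j : ℤ}
    (h1 : ∀ e : Fin n → ℕ, (∀ k, 1 ≤ e k) → ∀ l : ℕ, 1 ≤ l → Van x e 𝒩 (i - 1) (j + l))
    (g e : Fin n → ℕ) (he : ∀ k, 1 ≤ e k) {z : Coch n N} (hz : z ∈ Str e 𝒩 i j)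
    (hdz : dif x e z = 0) (hw : ∃ w ∈ Str (e + g) 𝒩 (i - 1) j, dif x (e + g) w = push x g z) :
    ∃ w ∈ Str e 𝒩 (i - 1) j, dif x e w = z := by
  induction hN : ∑ k, g k generalizing g e z with
  | zero =>
    have hg : g = 0 := by
      funext k
      exact (Finset.sum_eq_zero_iff.1 hN) k (Finset.mem_univ _)
    subst hg
    have hp : push x 0 z = z := by
      funext T; simp [push]
    rw [add_zero, hp] at hw
    exact hw
  | succ N ih =>
    obtain ⟨k, hk⟩ : ∃ k, 1 ≤ g k := by
      by_contra! hcon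
      rw [Finset.sum_eq_zero (fun k _ => by have := hcon k; omega)] at hN
      omega
    obtain ⟨g', rfl⟩ : ∃ g' : Fin n → ℕ, g = Pi.single k 1 + g' := by
      refine ⟨g - Pi.single k 1, funext fun s => ?_⟩
      by_cases hs : s = k
      · subst hs
        simp only [Pi.add_apply, Pi.single_eq_same, Pi.sub_apply]
        omega
      · simp [hs]
    have hpp : push x (Pi.single k 1 + g') z = push x g' (push x (Pi.single k 1) z) := by
      funext T
      simp only [push, Pi.add_apply, pow_add, Finset.prod_mul_distrib, smul_smul, mul_comm]
    rw [hpp, ← add_assoc] at hw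
    have hup : e + Pi.single k 1 = Function.update e k (e k + 1) := by
      rw [← update_add_single, Function.update_eq_self]
    obtain ⟨w, hw, hdw⟩ := ih g' (e + Pi.single k 1) (fun s => (he s).trans (by simp))
      (push_mem_str h hz) (by rw [push_dif, hdz]; funext T; simp [push]) hw
      (by
        have hs : ∑ s, ((Pi.single k 1 : Fin n → ℕ) + g') s = 1 + ∑ s, g' s := by
          simp [Finset.sum_add_distrib]
        omega)
    rw [hup] at hw hdw
    have := cobound_of_push_single (e := e) h k (e k) (h1 _ (by
        intro s
        by_cases hs : s = k
        · subst hs; simp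
        · simpa [hs] using he s) _ (he k))
      (by rwa [Function.update_eq_self]) (by rwa [Function.update_eq_self]) hw hdw
    rwa [Function.update_eq_self] at this

/-! ### Homogeneous components -/

/-- The isomorphism of a module with the direct sum of its graded pieces. -/
noncomputable def decEquiv {𝒩 : ℤ → AddSubgroup N} (h : DirectSum.IsInternal 𝒩) :
    DirectSum ℤ (fun i => 𝒩 i) ≃+ N := AddEquiv.ofBijective (DirectSum.coeAddMonoidHom 𝒩) h

/-- The component of degree `j` of an element, for a direct sum decomposition. -/
noncomputable def comp {𝒩 : ℤ → AddSubgroup N} (h : DirectSum.IsInternal 𝒩) (j : ℤ) : N →+ N where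
  toFun m := ((decEquiv h).symm m j : N)
  map_zero' := by simp
  map_add' a b := by simp

lemma comp_mem {𝒩 : ℤ → AddSubgroup N} (h : DirectSum.IsInternal 𝒩) (j : ℤ) (m : N) :
    comp h j m ∈ 𝒩 j := SetLike.coe_mem _

lemma comp_of_mem {𝒩 : ℤ → AddSubgroup N} (h : DirectSum.IsInternal 𝒩) {j : ℤ} (j' : ℤ) {m : N}
    (hm : m ∈ 𝒩 j) : comp h j' m = if j' = j then m else 0 := by
  have : (decEquiv h).symm m = DirectSum.of (fun i => 𝒩 i) j ⟨m, hm⟩ := by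
    rw [AddEquiv.symm_apply_eq]
    exact (DirectSum.coeAddMonoidHom_of 𝒩 j ⟨m, hm⟩).symm
  change ((decEquiv h).symm m j' : N) = _
  rw [this, DirectSum.coe_of_apply]
  simp only [eq_comm]
  split_ifs <;> rfl

/-- Additive induction on homogeneous elements. -/
lemma homog_induction {𝒩 : ℤ → AddSubgroup N} (h : DirectSum.IsInternal 𝒩) {P : N → Prop}
    (h0 : P 0) (hadd : ∀ a b, P a → P b → P (a + b)) (hom : ∀ j, ∀ m ∈ 𝒩 j, P m) (m : N) : P m := by
  obtain ⟨y, rfl⟩ := h.2 m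
  induction y using DirectSum.induction_on with
  | zero => simpa using h0
  | of i a => simpa using hom i a a.2
  | add a b ha hb => rw [map_add]; exact hadd _ _ ha hb

lemma comp_bdd {𝒩 : ℤ → AddSubgroup N} (h : DirectSum.IsInternal 𝒩) (m : N) :
    ∃ J, ∀ j, J < j → comp h j m = 0 := by
  induction m using homog_induction h with
  | h0 => exact ⟨0, fun j _ => map_zero _⟩
  | hadd a b ha hb =>
    obtain ⟨J, hJ⟩ := ha
    obtain ⟨J', hJ'⟩ := hb
    exact ⟨max J J', fun j hj => by
      rw [map_add, hJ _ ((le_max_left _ _).trans_lt hj), hJ' _ ((le_max_right _ _).trans_lt hj),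
        add_zero]⟩
  | hom i m hm => exact ⟨i, fun j hj => by rw [comp_of_mem h j hm, if_neg hj.ne']⟩

lemma comp_smul {𝒜 : ℤ → AddSubgroup S} {𝒩 : ℤ → AddSubgroup N} (h : IsGradedMod 𝒜 𝒩) {d j j' : ℤ}
    (hj : j' = d + j) {s : S} (hs : s ∈ 𝒜 d) (m : N) :
    comp h.internal j' (s • m) = s • comp h.internal j m := by
  subst hj
  induction m using homog_induction h.internal with
  | h0 => simp
  | hadd a b ha hb => rw [smul_add, map_add, map_add, smul_add, ha, hb]
  | hom i m hm =>
    rw [comp_of_mem _ _ (h.smul_mem hs hm), comp_of_mem _ _ hm]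
    by_cases hji : j = i
    · simp [hji]
    · simp [hji]

lemma isGradedMod_self {𝒜 : ℤ → AddSubgroup S} (h : IsStdGraded 𝒜) : IsGradedMod 𝒜 𝒜 :=
  ⟨h.internal, fun hs hm => h.mul_mem hs hm⟩

lemma pow_mem_graded {𝒜 : ℤ → AddSubgroup S} (h : IsStdGraded 𝒜) {s : S} (hs : s ∈ 𝒜 1) (v : ℕ) :
    s ^ v ∈ 𝒜 v := by
  induction v with
  | zero => simpa using h.one_mem
  | succ v ih => rw [pow_succ]; exact_mod_cast h.mul_mem ih hs

lemma IsGradedMod.stable {𝒜 : ℤ → AddSubgroup S} {𝒩 : ℤ → AddSubgroup N} (h : IsGradedMod 𝒜 𝒩)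
    {x : Fin n → S} (hx : ∀ k, x k ∈ 𝒜 1) : Stable x 𝒩 := fun k j m hm => by
  rw [add_comm]; exact h.smul_mem (hx k) hm

/-- The projection of cochains onto the strand `(i, j)`. -/
noncomputable def strProj {𝒩 : ℤ → AddSubgroup N} (h : DirectSum.IsInternal 𝒩) (e : Fin n → ℕ)
    (i j : ℤ) : Coch n N →+ Coch n N where
  toFun z T := if (T.card : ℤ) = i then comp h (j + (∑ s ∈ T, e s : ℕ)) (z T) else 0
  map_zero' := by funext T; simp
  map_add' a b := by
    funext T
    by_cases hT : (T.card : ℤ) = i <;> simp [hT]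

lemma strProj_apply {𝒩 : ℤ → AddSubgroup N} (h : DirectSum.IsInternal 𝒩) (e : Fin n → ℕ)
    (i j : ℤ) (z : Coch n N) (T : Finset (Fin n)) : strProj h e i j z T =
      if (T.card : ℤ) = i then comp h (j + (∑ s ∈ T, e s : ℕ)) (z T) else 0 := rfl

lemma strProj_mem {𝒩 : ℤ → AddSubgroup N} (h : DirectSum.IsInternal 𝒩) (e : Fin n → ℕ)
    (i j : ℤ) (z : Coch n N) : strProj h e i j z ∈ Str e 𝒩 i j := by
  intro T
  rw [strProj_apply]
  split_ifs with hT
  · exact ⟨comp_mem _ _ _, fun h => absurd hT h⟩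
  · exact ⟨zero_mem _, fun _ => rfl⟩

lemma strProj_of_mem {𝒩 : ℤ → AddSubgroup N} (h : DirectSum.IsInternal 𝒩) {e : Fin n → ℕ}
    {i j : ℤ} {z : Coch n N} (hz : z ∈ Str e 𝒩 i j) : strProj h e i j z = z := by
  funext T
  rw [strProj_apply]
  split_ifs with hT
  · rw [comp_of_mem h _ (hz T).1, if_pos rfl]
  · exact ((hz T).2 hT).symm

lemma strProj_dif {𝒜 : ℤ → AddSubgroup S} (hS : IsStdGraded 𝒜) {𝒩 : ℤ → AddSubgroup N}
    (h : IsGradedMod 𝒜 𝒩) {x : Fin n → S} (hx : ∀ k, x k ∈ 𝒜 1) (e : Fin n → ℕ)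
    (i j : ℤ) (z : Coch n N) :
    strProj h.internal e i j (dif x e z) = dif x e (strProj h.internal e (i - 1) j z) := by
  funext T
  rw [strProj_apply, dif_apply, dif_apply]
  have hc : ∀ s ∈ T, ((T.erase s).card : ℤ) = T.card - 1 := fun s hs => by
    rw [← Finset.card_erase_add_one hs]; push_cast; ring
  split_ifs with hT
  · rw [map_sum]
    refine Finset.sum_congr rfl fun s hs => ?_
    rw [strProj_apply, if_pos (by rw [hc s hs, hT]), map_zsmul]
    congr 1
    refine comp_smul h ?_ (pow_mem_graded hS (hx s) (e s)) _
    rw [← Finset.add_sum_erase T _ hs]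
    push_cast
    ring
  · symm
    refine Finset.sum_eq_zero fun s hs => ?_
    rw [strProj_apply, if_neg (by rw [hc s hs]; omega), smul_zero, smul_zero]

/-- A homogeneous coboundary is the coboundary of a homogeneous cochain. -/
lemma exists_str_of_dif {𝒜 : ℤ → AddSubgroup S} (hS : IsStdGraded 𝒜) {𝒩 : ℤ → AddSubgroup N}
    (h : IsGradedMod 𝒜 𝒩) {x : Fin n → S} (hx : ∀ k, x k ∈ 𝒜 1) {e : Fin n → ℕ}
    {i j : ℤ} {z w : Coch n N} (hz : z ∈ Str e 𝒩 i j) (hw : dif x e w = z) :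
    ∃ w ∈ Str e 𝒩 (i - 1) j, dif x e w = z :=
  ⟨_, strProj_mem h.internal e (i - 1) j w, by
    rw [← strProj_dif hS h hx, hw, strProj_of_mem _ hz]⟩

/-! ### Regularity through exponent-one Koszul cohomology -/

/-- Extension by zero of a cochain concentrated in cohomological degree `i`. -/
def ext0 {i : ℕ} (z : KCochain N n i) : Coch n N := fun T => if h : T.card = i then z ⟨T, h⟩ else 0

lemma ext0_apply {i : ℕ} (z : KCochain N n i) {T : Finset (Fin n)} (h : T.card = i) :
    ext0 z T = z ⟨T, h⟩ := dif_pos h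

lemma ext0_injective {i : ℕ} : Function.Injective (ext0 : KCochain N n i → Coch n N) := by
  intro y z h
  funext T
  have := congrFun h T.1
  rwa [ext0_apply _ T.2, ext0_apply _ T.2] at this

lemma ext0_kd (x : Fin n → S) (t i : ℕ) (z : KCochain N n i) :
    ext0 (kd x t i z) = dif x (fun _ => t) (ext0 z) := by
  funext T
  rw [dif_apply]
  by_cases hT : T.card = i + 1
  · rw [ext0_apply _ hT, kd, ← Finset.sum_attach T]
    refine Finset.sum_congr rfl fun s _ => ?_
    rw [ext0_apply]
    rfl
  · rw [ext0, dif_neg hT]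
    symm
    refine Finset.sum_eq_zero fun s hs => ?_
    rw [ext0, dif_neg, smul_zero, smul_zero]
    rw [← Finset.card_erase_add_one hs] at hT
    omega

lemma ext0_kpush (x : Fin n → S) (u i : ℕ) (z : KCochain N n i) :
    ext0 (kpush x u i z) = push x (fun _ => u) (ext0 z) := by
  funext T
  rw [push]
  by_cases hT : T.card = i
  · rw [ext0_apply _ hT, ext0_apply _ hT, kpush]
  · rw [ext0, ext0, dif_neg hT, dif_neg hT, smul_zero]

lemma exists_ext0 {i : ℕ} {z : Coch n N} (hz : ∀ T, (T.card : ℤ) ≠ i → z T = 0) :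
    ∃ y : KCochain N n i, ext0 y = z := by
  refine ⟨fun T => z T.1, ?_⟩
  funext T
  rw [ext0]
  split_ifs with h
  · rfl
  · exact (hz T (by exact_mod_cast h)).symm

lemma ext0_mem_str {𝒩 : ℤ → AddSubgroup N} {t i : ℕ} {j : ℤ} {z : KCochain N n i} :
    ext0 z ∈ Str (fun _ => t) 𝒩 i j ↔ kStrand 𝒩 t i j z := by
  constructor
  · intro h T
    have := (h T.1).1
    rw [ext0_apply _ T.2] at this
    simpa [T.2, mul_comm] using this
  · intro h T
    refine ⟨?_, fun hT => ?_⟩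
    · by_cases hT : T.card = i
      · rw [ext0_apply _ hT]
        simpa [hT, mul_comm] using h ⟨T, hT⟩
      · rw [ext0, dif_neg hT]; exact zero_mem _
    · rw [ext0, dif_neg (by exact_mod_cast hT)]

lemma kIsCobound_of_dif {x : Fin n → S} {𝒩 : ℤ → AddSubgroup N} {t i : ℕ} {j : ℤ}
    {z : KCochain N n i} (h : ∃ w ∈ Str (fun _ => t) 𝒩 (i - 1) j, dif x (fun _ => t) w = ext0 z) :
    kIsCobound x t i z := by
  obtain ⟨w, hw, hdw⟩ := h
  cases i with
  | zero =>
    rw [Str.eq_zero (Or.inl (by simp)) hw, map_zero] at hdw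
    refine ext0_injective ?_
    rw [← hdw]
    funext T
    rw [ext0]
    split_ifs <;> rfl
  | succ i =>
    obtain ⟨y, rfl⟩ := exists_ext0 (i := i) (z := w) fun T hT => (hw T).2 (by simpa using hT)
    exact ⟨y, ext0_injective (by rw [ext0_kd, hdw])⟩

lemma dif_of_kIsCobound {x : Fin n → S} {t i : ℕ} {z : KCochain N n i} (h : kIsCobound x t i z) :
    ∃ w, dif x (fun _ => t) w = ext0 z := by
  cases i with
  | zero =>
    obtain rfl : z = 0 := h
    refine ⟨0, ?_⟩
    rw [map_zero]
    funext T
    rw [ext0]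
    split_ifs <;> rfl
  | succ i =>
    obtain ⟨w, rfl⟩ := h
    exact ⟨ext0 w, (ext0_kd x t i w).symm⟩

lemma dif_zero_of_kd {x : Fin n → S} {t i : ℕ} {z : KCochain N n i} (h : kd x t i z = 0) :
    dif x (fun _ => t) (ext0 z) = 0 := by
  rw [← ext0_kd, h]
  funext T
  rw [ext0]
  split_ifs <;> rfl

/-- Koszul cohomology vanishing for all positive exponents forces local cohomology to vanish. -/
lemma not_lcNZ {x : Fin n → S} {𝒩 : ℤ → AddSubgroup N} (hst : Stable x 𝒩) {i : ℕ} {j : ℤ}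
    (h : ∀ e : Fin n → ℕ, (∀ k, 1 ≤ e k) → Van x e 𝒩 i j) : ¬ lcNZ x 𝒩 i j := by
  rintro ⟨t, z, hz, hdz, hu⟩
  -- exponent `t = 0` is allowed in `lcNZ`, so the class is first pushed to exponent `t + 1`
  refine hu 1 (kIsCobound_of_dif (𝒩 := 𝒩) (j := j) ?_)
  rw [ext0_kpush]
  refine h (fun _ => t + 1) (fun _ => by simp) _ ?_ ?_
  · exact push_mem_str (g := fun _ => 1) hst (ext0_mem_str.2 hz)
  · have := push_dif x (fun _ => t) (fun _ => 1) (ext0 z)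
    rw [dif_zero_of_kd hdz] at this
    refine this.trans ?_
    funext T
    simp [push]

/-- A nonzero exponent-one Koszul class survives in local cohomology if the Koszul cohomology one step
to the left vanishes in larger internal degrees, for all positive exponents. -/
lemma lcNZ_of_not_van {𝒜 : ℤ → AddSubgroup S} (hS : IsStdGraded 𝒜) {𝒩 : ℤ → AddSubgroup N}
    (h : IsGradedMod 𝒜 𝒩) {x : Fin n → S} (hx : ∀ k, x k ∈ 𝒜 1) {i : ℕ} {j : ℤ}
    (h1 : ∀ e : Fin n → ℕ, (∀ k, 1 ≤ e k) → ∀ l : ℕ, 1 ≤ l → Van x e 𝒩 (i - 1) (j + l))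
    (hv : ¬ Van x 1 𝒩 i j) : lcNZ x 𝒩 i j := by
  have hst := IsGradedMod.stable h hx
  rw [Van] at hv
  push Not at hv
  obtain ⟨z, hz, hdz, hw⟩ := hv
  obtain ⟨y, rfl⟩ := exists_ext0 (i := i) fun T hT => (hz T).2 hT
  refine ⟨1, y, ext0_mem_str.1 hz, ext0_injective ?_, fun u hu => ?_⟩
  · rw [ext0_kd]
    refine Eq.trans hdz ?_
    funext T
    rw [ext0]
    split_ifs <;> rfl
  · obtain ⟨w, hdw⟩ := dif_of_kIsCobound hu
    rw [ext0_kpush] at hdw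
    obtain ⟨w', hw', hdw'⟩ := cobound_of_push hst h1 (fun _ => u) 1 (fun _ => le_rfl) hz hdz
      (exists_str_of_dif hS h hx (push_mem_str hst hz) hdw)
    exact hw w' hw' hdw'

/-- If exponent-one Koszul cohomology vanishes for `i + j > ρ` but not for `i + j = ρ`, then `ρ` is
the regularity. The class to be traced through the direct limit is one with `i + j = ρ` and `i`
minimal. -/
lemma regVal_eq {𝒜 : ℤ → AddSubgroup S} (hS : IsStdGraded 𝒜) {𝒩 : ℤ → AddSubgroup N}
    (h : IsGradedMod 𝒜 𝒩) {x : Fin n → S} (hx : ∀ k, x k ∈ 𝒜 1) {ρ : ℤ}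
    (hup : ∀ i j, ρ < j + i → Van x 1 𝒩 i j) (hlo : ∃ i, ¬ Van x 1 𝒩 i (ρ - i)) :
    regVal x 𝒩 = Deg.of ρ := by
  have hst := IsGradedMod.stable h hx
  obtain ⟨i, hi, hmin⟩ := Int.exists_least_of_bdd (P := fun i => ¬ Van x 1 𝒩 i (ρ - i))
    ⟨0, fun i hi => by
      by_contra hneg
      exact hi (Van.of_range (Or.inl (by omega)))⟩ hlo
  have hi0 : 0 ≤ i := by
    by_contra hneg
    exact hi (Van.of_range (Or.inl (by omega)))
  lift i to ℕ using hi0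
  have hall := Van.all (Q := fun i' j => ρ < j + i' ∨ (j + i' = ρ ∧ i' < i)) hst
    (fun a b l hab => by
      rcases l.eq_zero_or_pos with rfl | hl
      · simpa using hab
      · left; rcases hab with hab | hab <;> omega)
    (fun a b hab => by
      rcases hab with hab | ⟨hab, hlt⟩
      · exact hup a b hab
      · by_contra hcon
        have := hmin a (by rwa [show ρ - a = b by omega])
        omega)
  refine IsLUB.sSup_eq ⟨?_, fun b hb => hb ⟨i, ρ - i, ?_, by rw [sub_add_cancel]⟩⟩
  · rintro d ⟨i', j, hlc, rfl⟩
    have : j + i' ≤ ρ := by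
      by_contra! hlt
      exact not_lcNZ hst (fun e he => hall e he i' j (Or.inl hlt)) hlc
    exact WithBot.coe_le_coe.2 (WithTop.coe_le_coe.2 this)
  · exact lcNZ_of_not_van hS h hx
      (fun e he l hl => hall e he _ _ (by omega)) hi

lemma regVal_eq_bot {x : Fin n → S} {𝒩 : ℤ → AddSubgroup N} (h : ∀ m : N, m = 0) :
    regVal x 𝒩 = ⊥ := by
  refine sSup_eq_bot.2 ?_
  rintro d ⟨i, j, ⟨t, z, -, -, hu⟩, -⟩
  refine absurd ?_ (hu 0)
  have hz : ∀ {i : ℕ} (y y' : KCochain N n i), y = y' := fun y y' =>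
    funext fun T => (h _).trans (h _).symm
  cases i with
  | zero => exact hz _ _
  | succ i => exact ⟨0, hz _ _⟩

/-! ### Long exact sequences -/

variable {N' : Type} [AddCommGroup N'] [Module S N']

/-- A short exact sequence `0 → 𝒩₁ → 𝒩₂ → 𝒩₃ → 0` of graded families, the first being a
subfamily of the second. -/
structure SES (𝒩₁ 𝒩₂ : ℤ → AddSubgroup N) (𝒩₃ : ℤ → AddSubgroup N') (g : N →ₗ[S] N') : Prop where
  mem_iff : ∀ j m, m ∈ 𝒩₁ j ↔ m ∈ 𝒩₂ j ∧ g m = 0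
  map_mem : ∀ j, ∀ m ∈ 𝒩₂ j, g m ∈ 𝒩₃ j
  surj : ∀ j, ∀ y ∈ 𝒩₃ j, ∃ m ∈ 𝒩₂ j, g m = y

lemma dif_compLeft (x : Fin n → S) (e : Fin n → ℕ) (g : N →ₗ[S] N') (z : Coch n N) :
    dif x e (g.compLeft _ z) = g.compLeft _ (dif x e z) := by
  funext T
  rw [dif_apply, LinearMap.compLeft_apply, Function.comp_apply, dif_apply, map_sum]
  refine Finset.sum_congr rfl fun s _ => ?_
  rw [map_zsmul, map_smul]
  rfl

lemma compLeft_mem_str {e : Fin n → ℕ} {𝒩 : ℤ → AddSubgroup N} {𝒩' : ℤ → AddSubgroup N'}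
    {g : N →ₗ[S] N'} {i j j' : ℤ}
    (hg : ∀ l, ∀ m ∈ 𝒩 (j + l), g m ∈ 𝒩' (j' + l)) {z : Coch n N}
    (hz : z ∈ Str e 𝒩 i j) : g.compLeft _ z ∈ Str e 𝒩' i j' := fun T =>
  ⟨hg _ _ (hz T).1, fun hT => by
    rw [LinearMap.compLeft_apply, Function.comp_apply, (hz T).2 hT, map_zero]⟩

namespace SES

variable {𝒩₁ 𝒩₂ : ℤ → AddSubgroup N} {𝒩₃ : ℤ → AddSubgroup N'} {g : N →ₗ[S] N'}

lemma mem_str_iff (h : SES 𝒩₁ 𝒩₂ 𝒩₃ g) {e : Fin n → ℕ} {i j : ℤ} {z : Coch n N} :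
    z ∈ Str e 𝒩₁ i j ↔ z ∈ Str e 𝒩₂ i j ∧ g.compLeft _ z = 0 := by
  constructor
  · intro hz
    exact ⟨fun T => ⟨((h.mem_iff _ _).1 (hz T).1).1, (hz T).2⟩,
      funext fun T => ((h.mem_iff _ _).1 (hz T).1).2⟩
  · rintro ⟨hz, hg⟩ T
    exact ⟨(h.mem_iff _ _).2 ⟨(hz T).1, congrFun hg T⟩, (hz T).2⟩

lemma map_str (h : SES 𝒩₁ 𝒩₂ 𝒩₃ g) {e : Fin n → ℕ} {i j : ℤ} {z : Coch n N}
    (hz : z ∈ Str e 𝒩₂ i j) : g.compLeft _ z ∈ Str e 𝒩₃ i j :=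
  compLeft_mem_str (fun _ _ hm => h.map_mem _ _ hm) hz

lemma surj_str (h : SES 𝒩₁ 𝒩₂ 𝒩₃ g) {e : Fin n → ℕ} {i j : ℤ} {y : Coch n N'}
    (hy : y ∈ Str e 𝒩₃ i j) : ∃ z ∈ Str e 𝒩₂ i j, g.compLeft _ z = y := by
  have : ∀ T : Finset (Fin n), ∃ m ∈ 𝒩₂ (j + (∑ s ∈ T, e s : ℕ)),
      g m = y T ∧ ((T.card : ℤ) ≠ i → m = 0) := by
    intro T
    by_cases hT : (T.card : ℤ) = i
    · obtain ⟨m, hm, hgm⟩ := h.surj _ _ (hy T).1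
      exact ⟨m, hm, hgm, fun h => absurd hT h⟩
    · exact ⟨0, zero_mem _, by rw [map_zero, (hy T).2 hT], fun _ => rfl⟩
  choose z hz hgz h0 using this
  exact ⟨z, fun T => ⟨hz T, h0 T⟩, funext hgz⟩

/-- Cocycles lift when the next cohomology of the subobject vanishes. -/
lemma lift_cocycle (h : SES 𝒩₁ 𝒩₂ 𝒩₃ g) {x : Fin n → S} (hst : Stable x 𝒩₂) {e : Fin n → ℕ}
    {i j : ℤ} (hv : Van x e 𝒩₁ (i + 1) j) {y : Coch n N'} (hy : y ∈ Str e 𝒩₃ i j)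
    (hdy : dif x e y = 0) : ∃ z ∈ Str e 𝒩₂ i j, dif x e z = 0 ∧ g.compLeft _ z = y := by
  obtain ⟨z, hz, rfl⟩ := h.surj_str hy
  obtain ⟨v, hv, hdv⟩ := hv (dif x e z)
    (h.mem_str_iff.2 ⟨dif_mem_str hst rfl hz, by rw [← dif_compLeft, hdy]⟩) (dif_dif _ _ _)
  rw [add_sub_cancel_right] at hv
  obtain ⟨hv2, hgv⟩ := h.mem_str_iff.1 hv
  exact ⟨z - v, sub_mem hz hv2, by rw [map_sub, hdv, sub_self], by rw [map_sub, hgv, sub_zero]⟩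

lemma van_right (h : SES 𝒩₁ 𝒩₂ 𝒩₃ g) {x : Fin n → S} (hst : Stable x 𝒩₂) {e : Fin n → ℕ}
    {i j : ℤ} (h2 : Van x e 𝒩₂ i j) (h1 : Van x e 𝒩₁ (i + 1) j) : Van x e 𝒩₃ i j := by
  intro y hy hdy
  obtain ⟨z, hz, hdz, rfl⟩ := h.lift_cocycle hst h1 hy hdy
  obtain ⟨w, hw, rfl⟩ := h2 z hz hdz
  exact ⟨g.compLeft _ w, h.map_str hw, dif_compLeft _ _ _ _⟩

lemma van_left (h : SES 𝒩₁ 𝒩₂ 𝒩₃ g) {x : Fin n → S} (hst : Stable x 𝒩₂) {e : Fin n → ℕ}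
    {i j : ℤ} (h3 : Van x e 𝒩₃ (i - 1) j) (h2 : Van x e 𝒩₂ i j) : Van x e 𝒩₁ i j := by
  intro z hz hdz
  obtain ⟨hz2, hgz⟩ := h.mem_str_iff.1 hz
  obtain ⟨w, hw, hdw⟩ := h2 z hz2 hdz
  obtain ⟨v, hv, hdv⟩ := h3 (g.compLeft _ w) (h.map_str hw) (by rw [dif_compLeft, hdw, hgz])
  obtain ⟨u, hu, rfl⟩ := h.surj_str hv
  refine ⟨w - dif x e u, h.mem_str_iff.2 ⟨sub_mem hw (dif_mem_str hst (by ring) hu), ?_⟩, ?_⟩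
  · rw [map_sub, ← dif_compLeft, hdv, sub_self]
  · rw [map_sub, dif_dif, sub_zero, hdw]

end SES

lemma Van.of_trivial {x : Fin n → S} {e : Fin n → ℕ} {𝒩 : ℤ → AddSubgroup N} {i j : ℤ}
    (h : ∀ j, ∀ m ∈ 𝒩 j, m = 0) : Van x e 𝒩 i j := fun z hz _ =>
  ⟨0, zero_mem _, by rw [map_zero]; exact funext fun T => (h _ _ (hz T).1).symm⟩

/-! ### Finiteness of the Koszul cohomology of the ring -/

lemma mem_span_of_pos {𝒜 : ℤ → AddSubgroup S} (hS : IsStdGraded 𝒜) {x : Fin n → S}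
    (hx : GensDegOne 𝒜 x) {j : ℤ} (hj : 0 < j) {s : S} (hs : s ∈ 𝒜 j) :
    s ∈ Ideal.span (Set.range x) := by
  have h1 : ∀ s ∈ 𝒜 1, s ∈ Ideal.span (Set.range x) := by
    intro s hs
    have : AddSubgroup.closure {y : S | ∃ r ∈ 𝒜 0, ∃ i, y = r * x i} ≤
        (Ideal.span (Set.range x)).toAddSubgroup := by
      rw [AddSubgroup.closure_le]
      rintro _ ⟨r, -, i, rfl⟩
      exact Ideal.mul_mem_left _ _ (Ideal.subset_span ⟨i, rfl⟩)
    exact this (hx.2 s hs)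
  have : AddSubgroup.closure {y : S | ∃ s ∈ 𝒜 1, ∃ b ∈ 𝒜 (j - 1), y = s * b} ≤
      (Ideal.span (Set.range x)).toAddSubgroup := by
    rw [AddSubgroup.closure_le]
    rintro _ ⟨s, hs, b, -, rfl⟩
    exact Ideal.mul_mem_right _ _ (h1 s hs)
  exact this (hS.gen_one (j - 1) (by omega) s (by rwa [sub_add_cancel]))

lemma sub_comp_mem_span {𝒜 : ℤ → AddSubgroup S} (hS : IsStdGraded 𝒜) {x : Fin n → S}
    (hx : GensDegOne 𝒜 x) (s : S) : s - comp hS.internal 0 s ∈ Ideal.span (Set.range x) := by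
  induction s using homog_induction hS.internal with
  | h0 => simp
  | hadd a b ha hb => rw [map_add, add_sub_add_comm]; exact add_mem ha hb
  | hom j m hm =>
    rw [comp_of_mem _ _ hm]
    rcases lt_trichotomy j 0 with hj | rfl | hj
    · rw [hS.bot_of_neg j hj, AddSubgroup.mem_bot] at hm
      simp [hm]
    · simp
    · rw [if_neg hj.ne, sub_zero]
      exact mem_span_of_pos hS hx hj hm

lemma strProj_smul {𝒜 : ℤ → AddSubgroup S} (hS : IsStdGraded 𝒜) (e : Fin n → ℕ) (i j : ℤ) {c : S}
    (hc : c ∈ 𝒜 0) (z : Coch n S) :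
    strProj hS.internal e i j (c • z) = c • strProj hS.internal e i j z := by
  funext T
  rw [Pi.smul_apply, strProj_apply, strProj_apply]
  split_ifs
  · exact comp_smul (isGradedMod_self hS) (zero_add _).symm hc _
  · rw [smul_zero]

/-- Koszul cohomology of `S` is finitely generated over `S`, and killed by `S₊`; hence
finitely many cocycles generate it over the degree-zero part. -/
lemma exists_gens [IsNoetherianRing S] {𝒜 : ℤ → AddSubgroup S} (hS : IsStdGraded 𝒜)
    {x : Fin n → S} (hx : GensDegOne 𝒜 x) :
    ∃ G : Finset (Coch n S), (∀ g ∈ G, dif x 1 g = 0) ∧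
      ∀ i j, ∀ z ∈ Str 1 𝒜 i j, dif x 1 z = 0 → ∃ c : Coch n S → S, (∀ g, c g ∈ 𝒜 0) ∧
        ∃ w ∈ Str 1 𝒜 (i - 1) j,
          z = ∑ g ∈ G, c g • strProj hS.internal 1 i j g + dif x 1 w := by
  obtain ⟨G, hG⟩ := IsNoetherian.noetherian (LinearMap.ker (dif x 1 : Coch n S →ₗ[S] Coch n S))
  have hker : ∀ g ∈ G, dif x 1 g = 0 := fun g hg => by
    have : g ∈ LinearMap.ker (dif x 1 : Coch n S →ₗ[S] Coch n S) := hG ▸ Submodule.subset_span hg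
    exact this
  refine ⟨G, hker, fun i j z hz hdz => ?_⟩
  have hzs : z ∈ Submodule.span S (G : Set (Coch n S)) := hG ▸ (show z ∈ LinearMap.ker _ from hdz)
  obtain ⟨f, -, rfl⟩ := Submodule.mem_span_finset.1 hzs
  have hann : ∀ s ∈ Ideal.span (Set.range x), ∀ g ∈ G, ∃ w, dif x 1 w = s • g := by
    intro s hs g hg
    induction hs using Submodule.span_induction with
    | mem y hy =>
      obtain ⟨k, rfl⟩ := hy
      have := dif_contr x 1 k g
      rw [hker g hg, map_zero, add_zero, Pi.one_apply, pow_one] at this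
      exact ⟨_, this⟩
    | zero => exact ⟨0, by simp⟩
    | add a b _ _ ha hb =>
      obtain ⟨w, hw⟩ := ha
      obtain ⟨w', hw'⟩ := hb
      exact ⟨w + w', by rw [map_add, hw, hw', add_smul]⟩
    | smul a b _ hb =>
      obtain ⟨w, hw⟩ := hb
      exact ⟨a • w, by rw [map_smul, hw, smul_smul, smul_eq_mul]⟩
  have hann' : ∀ g, ∃ w, g ∈ G → dif x 1 w = (f g - comp hS.internal 0 (f g)) • g := by
    intro g
    by_cases hg : g ∈ G
    · obtain ⟨w, hw⟩ := hann _ (sub_comp_mem_span hS hx (f g)) g hg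
      exact ⟨w, fun _ => hw⟩
    · exact ⟨0, fun h => absurd h hg⟩
  choose W hW using hann'
  refine ⟨fun g => comp hS.internal 0 (f g), fun g => comp_mem _ _ _,
    strProj hS.internal 1 (i - 1) j (∑ g ∈ G, W g), strProj_mem _ _ _ _ _, ?_⟩
  rw [← strProj_dif hS (isGradedMod_self hS) hx.1]
  nth_rewrite 1 [← strProj_of_mem hS.internal hz]
  have : ∑ g ∈ G, f g • g = ∑ g ∈ G, comp hS.internal 0 (f g) • g + dif x 1 (∑ g ∈ G, W g) := by
    rw [map_sum, ← Finset.sum_add_distrib]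
    refine Finset.sum_congr rfl fun g hg => ?_
    rw [hW g hg, sub_smul, add_sub_cancel]
  rw [this, map_add, map_sum]
  congr 1
  exact Finset.sum_congr rfl fun g _ => strProj_smul hS _ _ _ (comp_mem _ _ _) _

/-- Koszul cohomology of `S` vanishes for `i + j ≫ 0`. -/
lemma exists_bound [IsNoetherianRing S] {𝒜 : ℤ → AddSubgroup S} (hS : IsStdGraded 𝒜)
    {x : Fin n → S} (hx : GensDegOne 𝒜 x) : ∃ J, ∀ i j, J < j + i → Van x 1 𝒜 i j := by
  obtain ⟨G, -, hG⟩ := exists_gens hS hx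
  choose J hJ using fun s : S => comp_bdd hS.internal s
  obtain ⟨B, hB⟩ : ∃ B, ∀ g ∈ G, ∀ T, J (g T) ≤ B := by
    obtain ⟨B, hB⟩ := ((G ×ˢ (Finset.univ : Finset (Finset (Fin n)))).image
      fun p => J (p.1 p.2)).bddAbove
    exact ⟨B, fun g hg T => hB (by
      simp only [Finset.coe_image, Set.mem_image]
      exact ⟨(g, T), by simpa using hg, rfl⟩)⟩
  refine ⟨B, fun i j hij z hz hdz => ?_⟩
  obtain ⟨c, -, w, hw, rfl⟩ := hG i j z hz hdz
  refine ⟨w, hw, ?_⟩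
  rw [Finset.sum_eq_zero, zero_add]
  intro g hg
  have : strProj hS.internal 1 i j g = 0 := by
    funext T
    rw [strProj_apply]
    split_ifs with hT
    · refine hJ _ _ ?_
      have := hB g hg T
      simp only [Pi.one_apply, Finset.sum_const, smul_eq_mul, mul_one, hT]
      omega
    · rfl
  rw [this, smul_zero]

/-- The strand of top cohomological degree `n` and internal degree `-n` is `S₀`. -/
lemma exists_not_van [Nontrivial S] {𝒜 : ℤ → AddSubgroup S} (hS : IsStdGraded 𝒜)
    (x : Fin n → S) : ¬ Van x 1 𝒜 n (-n) := by
  intro h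
  obtain ⟨w, hw, hdw⟩ := h (fun T => if T = Finset.univ then 1 else 0) (by
      intro T
      by_cases hT : T = Finset.univ
      · subst hT
        simpa using hS.one_mem
      · simp [hT, zero_mem]) (by
      funext T
      rw [dif_apply]
      refine Finset.sum_eq_zero fun s hs => ?_
      rw [if_neg, smul_zero, smul_zero]
      intro h
      have := Finset.mem_univ s
      rw [← h] at this
      exact Finset.notMem_erase _ _ this)
  have hw0 : w = 0 := by
    funext T
    by_cases hT : (T.card : ℤ) = n - 1
    · have := (hw T).1
      rw [hS.bot_of_neg _ (by simp; omega)] at this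
      exact this
    · exact (hw T).2 hT
  rw [hw0, map_zero] at hdw
  have := congrFun hdw Finset.univ
  simp at this

section Nakayama

variable {R₀ : Type} [CommRing R₀] [IsLocalRing R₀] [Algebra R₀ S]

/-- Nakayama's lemma for a nonzero graded piece of Koszul cohomology: some cocycle is not a
combination of cocycles with coefficients in the maximal ideal, modulo coboundaries. -/
lemma exists_not_mem [IsNoetherianRing S] {𝒜 : ℤ → AddSubgroup S} (hS : IsStdGraded 𝒜)
    (hover : GradedOver 𝒜 R₀) {x : Fin n → S} (hx : GensDegOne 𝒜 x) {i j : ℤ}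
    (hv : ¬ Van x 1 𝒜 i j) :
    ∃ z ∈ Str 1 𝒜 i j, dif x 1 z = 0 ∧ ∀ w ∈ Str 1 𝒜 (i - 1) j, ∀ (r : ℕ) (c : Fin r → R₀)
      (y : Fin r → Coch n S), (∀ a, c a ∈ IsLocalRing.maximalIdeal R₀) →
      (∀ a, y a ∈ Str 1 𝒜 i j ∧ dif x 1 (y a) = 0) →
      z ≠ dif x 1 w + ∑ a, algebraMap R₀ S (c a) • y a := by
  have h0 : ∀ c : R₀, algebraMap R₀ S c ∈ 𝒜 0 := fun c => by
    have : algebraMap R₀ S c ∈ (𝒜 0 : Set S) := by rw [hover.2]; exact ⟨c, rfl⟩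
    exact this
  by_contra! hcon
  apply hv
  let D : Coch n S →ₗ[R₀] Coch n S := (dif x 1 : Coch n S →ₗ[S] Coch n S).restrictScalars R₀
  let st : ℤ → Submodule R₀ (Coch n S) := fun i =>
    { toAddSubmonoid := (Str 1 𝒜 i j).toAddSubmonoid
      smul_mem' := fun c z hz T => by
        refine ⟨?_, fun hT => by rw [Pi.smul_apply, (hz T).2 hT, smul_zero]⟩
        have := hS.mul_mem (h0 c) (hz T).1
        rwa [zero_add, ← Algebra.smul_def] at this }
  let C : Submodule R₀ (Coch n S) := st i ⊓ LinearMap.ker D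
  let B : Submodule R₀ (Coch n S) := (st (i - 1)).map D
  obtain ⟨G, hG0, hG⟩ := exists_gens hS hx
  classical
  let G' : Submodule R₀ (Coch n S) :=
    Submodule.span R₀ (G.image (strProj hS.internal 1 i j) : Finset (Coch n S))
  have hG'C : G' ≤ C := by
    refine Submodule.span_le.2 ?_
    intro y hy
    simp only [Finset.coe_image, Set.mem_image] at hy
    obtain ⟨g, hg, rfl⟩ := hy
    refine ⟨strProj_mem _ _ _ _ _, ?_⟩
    change dif x 1 _ = 0
    have := strProj_dif hS (isGradedMod_self hS) hx.1 1 (i + 1) j g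
    rw [hG0 g hg, map_zero, add_sub_cancel_right] at this
    exact this.symm
  have hCG' : C ≤ G' ⊔ B := by
    rintro z ⟨hz, hdz⟩
    obtain ⟨c, hc, w, hw, rfl⟩ := hG i j z hz hdz
    refine Submodule.add_mem_sup (Submodule.sum_mem _ fun g hg => ?_) ⟨w, hw, rfl⟩
    have hcg : c g ∈ (𝒜 0 : Set S) := hc g
    rw [hover.2] at hcg
    obtain ⟨r, hr⟩ := hcg
    rw [← hr, algebraMap_smul]
    exact Submodule.smul_mem _ _ (Submodule.subset_span (by
      simp only [Finset.coe_image, Set.mem_image]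
      exact ⟨g, hg, rfl⟩))
  have hCm : C ≤ B ⊔ IsLocalRing.maximalIdeal R₀ • C := by
    rintro z ⟨hz, hdz⟩
    obtain ⟨w, hw, r, c, y, hc, hy, rfl⟩ := hcon z hz hdz
    refine Submodule.add_mem_sup ⟨w, hw, rfl⟩ (Submodule.sum_mem _ fun a _ => ?_)
    rw [algebraMap_smul]
    exact Submodule.smul_mem_smul (hc a) ⟨(hy a).1, (hy a).2⟩
  have hGB : G' ≤ B := by
    refine Submodule.le_of_le_smul_of_le_jacobson_bot (I := IsLocalRing.maximalIdeal R₀)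
      ⟨_, rfl⟩ (IsLocalRing.maximalIdeal_le_jacobson _) ?_
    refine (hG'C.trans hCm).trans (sup_le le_sup_left ?_)
    refine (Submodule.smul_mono le_rfl hCG').trans ?_
    rw [Submodule.smul_sup]
    exact sup_le le_sup_right (Submodule.smul_le_right.trans le_sup_left)
  intro z hz hdz
  obtain ⟨w, hw, hdw⟩ := (hCG'.trans (sup_le hGB le_rfl)) (⟨hz, hdz⟩ : z ∈ C)
  exact ⟨w, hw, hdw⟩

end Nakayama

/-! ### Syzygies of the resolution -/

section Resolution

variable {M : Type} [AddCommGroup M] [Module S M] {𝒜 : ℤ → AddSubgroup S}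
  {ℳ : ℤ → AddSubgroup M} {m0 : Set S} {x : Fin n → S}

lemma mem_fpiece {F : GFC 𝒜} {q : ℕ} {j : ℤ} {z : Fin (F.r q) → S} :
    z ∈ F.fpiece S 𝒜 q j ↔ ∀ a, z a ∈ 𝒜 (j - F.deg q a) :=
  ⟨fun h a => h a (Set.mem_univ a), fun h a _ => h a⟩

lemma stable_fpiece (hS : IsStdGraded 𝒜) (hx : ∀ k, x k ∈ 𝒜 1) (F : GFC 𝒜) (q : ℕ) :
    Stable x (F.fpiece S 𝒜 q) := by
  intro k j z hz
  rw [mem_fpiece] at hz ⊢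
  intro a
  have := IsGradedMod.stable (isGradedMod_self hS) hx k _ _ (hz a)
  rw [Pi.smul_apply]
  convert this using 2
  ring

lemma coord_mem_str {F : GFC 𝒜} {q : ℕ} {i j : ℤ} {z : Coch n (Fin (F.r q) → S)}
    (hz : z ∈ Str 1 (F.fpiece S 𝒜 q) i j) (a : Fin (F.r q)) :
    (LinearMap.proj (R := S) a).compLeft _ z ∈ Str 1 𝒜 i (j - F.deg q a) :=
  compLeft_mem_str (fun l m hm => by
    have := mem_fpiece.1 hm a
    rw [LinearMap.proj_apply]
    convert this using 2
    ring) hz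

/-- Koszul cohomology of a graded free module is the direct sum of shifts of that of `S`. -/
lemma van_fpiece {F : GFC 𝒜} {q : ℕ} {i j : ℤ} (h : ∀ a, Van x 1 𝒜 i (j - F.deg q a)) :
    Van x 1 (F.fpiece S 𝒜 q) i j := by
  intro z hz hdz
  choose w hw hdw using fun a => h a _ (coord_mem_str hz a) (by rw [dif_compLeft, hdz, map_zero])
  refine ⟨fun T a => w a T, fun T => ⟨mem_fpiece.2 fun a => ?_, fun hT => ?_⟩, ?_⟩
  · have := (hw a T).1
    convert this using 2
    ring
  · funext a
    exact (hw a T).2 hT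
  · funext T a
    have h1 := congrFun (hdw a) T
    have h2 : w a = (LinearMap.proj (R := S) a).compLeft _
        (fun T a => w a T : Coch n (Fin (F.r q) → S)) := rfl
    rw [h2, dif_compLeft] at h1
    exact h1

/-- The graded module of `q`-th syzygies, i.e. the image of `F_{q+1}` in `F_q`. -/
noncomputable def Zf (F : GFC 𝒜) (q : ℕ) (j : ℤ) : AddSubgroup (Fin (F.r q) → S) :=
  (F.fpiece S 𝒜 (q + 1) j).map (F.tmap S q).toAddMonoidHom

lemma tmap_mem (hS : IsStdGraded 𝒜) {F : GFC 𝒜} {q : ℕ} {j : ℤ} {w : Fin (F.r (q + 1)) → S}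
    (hw : w ∈ F.fpiece S 𝒜 (q + 1) j) : F.tmap S q w ∈ F.fpiece S 𝒜 q j := by
  rw [mem_fpiece] at hw ⊢
  intro b
  change ∑ a, F.mat q a b • w a ∈ _
  refine sum_mem fun a _ => ?_
  have := hS.mul_mem (F.mat_mem q a b) (hw a)
  rw [smul_eq_mul]
  convert this using 2
  ring

lemma tmap_comp (hS : IsStdGraded 𝒜) (F : GFC 𝒜) (q : ℕ) (j : ℤ) (w : Fin (F.r (q + 1)) → S) :
    F.tmap S q (fun a => comp hS.internal (j - F.deg (q + 1) a) (w a)) =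
      fun b => comp hS.internal (j - F.deg q b) (F.tmap S q w b) := by
  funext b
  change ∑ a, F.mat q a b • _ = comp _ _ (∑ a, F.mat q a b • w a)
  rw [map_sum]
  refine Finset.sum_congr rfl fun a _ => ?_
  exact (comp_smul (isGradedMod_self hS) (by ring) (F.mat_mem q a b) _).symm

lemma ses_succ (hS : IsStdGraded 𝒜) (F : MGFR 𝒜 ℳ m0) (q : ℕ) :
    SES (Zf F.toGFC (q + 1)) (F.fpiece S 𝒜 (q + 1)) (Zf F.toGFC q) (F.tmap S q) where
  mem_iff j m := by
    constructor
    · rintro ⟨w, hw, rfl⟩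
      exact ⟨tmap_mem hS hw, (F.exact_succ q _).2 ⟨w, rfl⟩⟩
    · rintro ⟨hm, h0⟩
      obtain ⟨w, hw⟩ := (F.exact_succ q _).1 h0
      change F.tmap S (q + 1) w = m at hw
      refine ⟨fun a => comp hS.internal (j - F.deg (q + 2) a) (w a),
        mem_fpiece.2 fun a => comp_mem _ _ _, ?_⟩
      change F.tmap S (q + 1) _ = m
      rw [tmap_comp hS, hw]
      funext b
      rw [comp_of_mem _ _ (mem_fpiece.1 hm b), if_pos rfl]
  map_mem j m hm := ⟨m, hm, rfl⟩
  surj j y hy := by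
    obtain ⟨m, hm, rfl⟩ := hy
    exact ⟨m, hm, rfl⟩

lemma comp_smul_hom (hS : IsStdGraded 𝒜) (h : IsGradedMod 𝒜 ℳ) {d j : ℤ} {m : M} (hm : m ∈ ℳ d)
    (s : S) : comp h.internal j (s • m) = comp hS.internal (j - d) s • m := by
  induction s using homog_induction hS.internal with
  | h0 => simp
  | hadd a b ha hb => rw [add_smul, map_add, ha, hb, map_add, add_smul]
  | hom k s hs =>
    rw [comp_of_mem _ _ (h.smul_mem hs hm), comp_of_mem _ _ hs]
    by_cases hj : j = k + d
    · rw [if_pos hj, if_pos (by omega)]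
    · rw [if_neg hj, if_neg (by omega), zero_smul]

lemma augm_comp (hS : IsStdGraded 𝒜) (h : IsGradedMod 𝒜 ℳ) (F : MGFR 𝒜 ℳ m0) (j : ℤ)
    (w : Fin (F.r 0) → S) :
    Fintype.linearCombination S F.augm (fun a => comp hS.internal (j - F.deg 0 a) (w a)) =
      comp h.internal j (Fintype.linearCombination S F.augm w) := by
  rw [Fintype.linearCombination_apply, Fintype.linearCombination_apply, map_sum]
  exact Finset.sum_congr rfl fun a _ => (comp_smul_hom hS h (F.augm_mem a) _).symm

lemma ses_zero (hS : IsStdGraded 𝒜) (h : IsGradedMod 𝒜 ℳ) (F : MGFR 𝒜 ℳ m0) :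
    SES (Zf F.toGFC 0) (F.fpiece S 𝒜 0) ℳ (Fintype.linearCombination S F.augm) where
  mem_iff j m := by
    constructor
    · rintro ⟨w, hw, rfl⟩
      exact ⟨tmap_mem hS hw, (F.exact_zero _).2 ⟨w, rfl⟩⟩
    · rintro ⟨hm, h0⟩
      obtain ⟨w, hw⟩ := (F.exact_zero _).1 h0
      change F.tmap S 0 w = m at hw
      refine ⟨fun a => comp hS.internal (j - F.deg 1 a) (w a),
        mem_fpiece.2 fun a => comp_mem _ _ _, ?_⟩
      change F.tmap S 0 _ = m
      rw [tmap_comp hS, hw]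
      funext b
      rw [comp_of_mem _ _ (mem_fpiece.1 hm b), if_pos rfl]
  map_mem j m hm := by
    rw [Fintype.linearCombination_apply]
    refine AddSubgroup.sum_mem _ fun a _ => ?_
    have := h.smul_mem (mem_fpiece.1 hm a) (F.augm_mem a)
    rwa [sub_add_cancel] at this
  surj j y hy := by
    obtain ⟨z, hz⟩ := F.augm_surj y
    refine ⟨fun a => comp hS.internal (j - F.deg 0 a) (z a),
      mem_fpiece.2 fun a => comp_mem _ _ _, ?_⟩
    rw [augm_comp hS h, Fintype.linearCombination_apply, hz, comp_of_mem _ _ hy, if_pos rfl]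

/-! ### Regularity along the resolution -/

/-- Vanishing of Koszul cohomology above the line `i + j = β + ρ`, and on the part of that line
where `i > i₀`. -/
def UVan (x : Fin n → S) (ρ i₀ : ℤ) (𝒩 : ℤ → AddSubgroup N) (β : ℤ) : Prop :=
  ∀ i j, (β + ρ < j + i ∨ (j + i = β + ρ ∧ i₀ < i)) → Van x 1 𝒩 i j

variable {ρ i₀ : ℤ}

lemma uvan_fpiece (hU : UVan x ρ i₀ 𝒜 0) {F : GFC 𝒜} {q : ℕ} {β : ℤ} (h : ∀ a, F.deg q a ≤ β) :
    UVan x ρ i₀ (F.fpiece S 𝒜 q) β := fun i j hij =>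
  van_fpiece fun a => hU _ _ (by have := h a; omega)

lemma uvan_step (hS : IsStdGraded 𝒜) (hx : ∀ k, x k ∈ 𝒜 1) (hU : UVan x ρ i₀ 𝒜 0) {F : GFC 𝒜}
    {q : ℕ} {𝒩₁ : ℤ → AddSubgroup (Fin (F.r q) → S)} {𝒩₃ : ℤ → AddSubgroup N'}
    {g : (Fin (F.r q) → S) →ₗ[S] N'} (h : SES 𝒩₁ (F.fpiece S 𝒜 q) 𝒩₃ g) {β : ℤ}
    (hd : ∀ a, F.deg q a ≤ β) (h1 : UVan x ρ i₀ 𝒩₁ (β + 1)) : UVan x ρ i₀ 𝒩₃ β := fun i j hij =>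
  h.van_right (stable_fpiece hS hx F q) (uvan_fpiece hU hd i j hij) (h1 _ _ (by omega))

/-- Generators of `F_{q'}`, `q' > q`, in degrees at most `γ + q'` bound the regularity of the
`q`-th syzygies. -/
lemma uvan_Zf (hS : IsStdGraded 𝒜) (hx : ∀ k, x k ∈ 𝒜 1) (hU : UVan x ρ i₀ 𝒜 0)
    (F : MGFR 𝒜 ℳ m0) {P : ℕ} (hP : ∀ q, P < q → F.r q = 0) {γ : ℤ} (q : ℕ)
    (hd : ∀ q', q + 1 ≤ q' → ∀ a, F.deg q' a ≤ γ + q') : UVan x ρ i₀ (Zf F.toGFC q) (γ + q + 1) := by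
  induction hm : P - q generalizing q with
  | zero =>
    intro i j _
    refine Van.of_trivial ?_
    rintro j _ ⟨w, -, rfl⟩
    have : IsEmpty (Fin (F.r (q + 1))) := by rw [hP (q + 1) (by omega)]; infer_instance
    rw [Subsingleton.elim w 0]
    exact map_zero (F.tmap S q)
  | succ m ih =>
    have := ih (q + 1) (fun q' hq' => hd q' (by omega)) (by omega)
    refine uvan_step hS hx hU (ses_succ hS F q) (fun a => ?_) ?_
    · have := hd (q + 1) le_rfl a
      push_cast at this
      omega
    · push_cast at this
      convert this using 1
      ring

variable {R₀ : Type} [CommRing R₀] [IsLocalRing R₀] [Algebra R₀ S]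

/-- Suppose that the strand `(i, j)` vanishes for the quotient `𝒩₃` of `F_q` by its syzygies, and
that no generator of `F_{q+1}` has degree exceeding that of the generator `a₀` of `F_q`. Then by
minimality every cocycle of `S` in the strand corresponding to `a₀` is, up to a coboundary, a
combination of cocycles with coefficients in the maximal ideal. -/
lemma crit (hS : IsStdGraded 𝒜) (hx : ∀ k, x k ∈ 𝒜 1)
    (F : MGFR 𝒜 ℳ ((algebraMap R₀ S) '' (IsLocalRing.maximalIdeal R₀ : Set R₀))) {q : ℕ}
    {𝒩₃ : ℤ → AddSubgroup N'} {g : (Fin (F.r q) → S) →ₗ[S] N'}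
    (h : SES (Zf F.toGFC q) (F.fpiece S 𝒜 q) 𝒩₃ g) {i j : ℤ}
    (h3 : Van x 1 𝒩₃ i j) (hZ : Van x 1 (Zf F.toGFC (q + 1)) (i + 1) j) {a₀ : Fin (F.r q)}
    (hd : ∀ a, F.deg (q + 1) a ≤ F.deg q a₀) {z : Coch n S}
    (hz : z ∈ Str 1 𝒜 i (j - F.deg q a₀)) (hdz : dif x 1 z = 0) :
    ∃ w ∈ Str 1 𝒜 (i - 1) (j - F.deg q a₀), ∃ (r : ℕ) (c : Fin r → R₀) (y : Fin r → Coch n S),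
      (∀ a, c a ∈ IsLocalRing.maximalIdeal R₀) ∧
      (∀ a, y a ∈ Str 1 𝒜 i (j - F.deg q a₀) ∧ dif x 1 (y a) = 0) ∧
      z = dif x 1 w + ∑ a, algebraMap R₀ S (c a) • y a := by
  classical
  let s : S →ₗ[S] (Fin (F.r q) → S) := LinearMap.single S (fun _ => S) a₀
  have hs : s.compLeft _ z ∈ Str 1 (F.fpiece S 𝒜 q) i j := by
    refine compLeft_mem_str (fun l m hm => mem_fpiece.2 fun a => ?_) hz
    change (Pi.single a₀ m : Fin (F.r q) → S) a ∈ _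
    by_cases ha : a = a₀
    · subst ha
      rw [Pi.single_eq_same]
      convert hm using 2
      ring
    · rw [Pi.single_eq_of_ne ha]
      exact zero_mem _
  have hds : dif x 1 (s.compLeft _ z) = 0 := by rw [dif_compLeft, hdz, map_zero]
  obtain ⟨v, hv, hdv⟩ := h3 _ (h.map_str hs) (by rw [dif_compLeft, hds, map_zero])
  obtain ⟨u, hu, rfl⟩ := h.surj_str hv
  obtain ⟨y, hy, hdy, hyz⟩ := (ses_succ hS F q).lift_cocycle
    (stable_fpiece hS hx F.toGFC (q + 1)) hZ (y := s.compLeft _ z - dif x 1 u)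
    (h.mem_str_iff.2 ⟨sub_mem hs (dif_mem_str (stable_fpiece hS hx F.toGFC q) (by ring) hu), by
      rw [map_sub, ← dif_compLeft, hdv, sub_self]⟩)
    (by rw [map_sub, hds, dif_dif, sub_zero])
  -- entries of the `a₀`-column vanish for generators of smaller degree, and lie in the maximal ideal
  -- for generators of the same degree
  have hc : ∀ a, ∃ c ∈ IsLocalRing.maximalIdeal R₀, F.mat q a a₀ = algebraMap R₀ S c := by
    intro a
    rcases (hd a).lt_or_eq with hlt | heq
    · have := F.mat_mem q a a₀
      rw [hS.bot_of_neg _ (by omega), AddSubgroup.mem_bot] at this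
      exact ⟨0, zero_mem _, by rw [this, map_zero]⟩
    · obtain ⟨c, hc, hcm⟩ := F.minimal q a a₀ heq
      exact ⟨c, hc, hcm.symm⟩
  choose c hcm hc using hc
  let Y : Fin (F.r (q + 1)) → Coch n S := fun a =>
    if F.deg (q + 1) a = F.deg q a₀ then (LinearMap.proj (R := S) a).compLeft _ y else 0
  refine ⟨(LinearMap.proj (R := S) a₀).compLeft _ u, coord_mem_str hu a₀, F.r (q + 1), c, Y, hcm,
    fun a => ?_, ?_⟩
  · by_cases ha : F.deg (q + 1) a = F.deg q a₀
    · simp only [Y, if_pos ha]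
      refine ⟨ha ▸ coord_mem_str hy a, ?_⟩
      rw [dif_compLeft, hdy, map_zero]
    · simp only [Y, if_neg ha]
      exact ⟨zero_mem _, map_zero _⟩
  · rw [dif_compLeft]
    funext T
    have h1 := congrFun (congrFun hyz T) a₀
    change ∑ a, F.mat q a a₀ • y T a = (Pi.single a₀ (z T) : Fin (F.r q) → S) a₀ -
      dif x 1 u T a₀ at h1
    rw [Pi.single_eq_same] at h1
    rw [sub_eq_iff_eq_add'.1 h1.symm, Pi.add_apply, Finset.sum_apply]
    congr 1
    refine Finset.sum_congr rfl fun a _ => ?_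
    rw [Pi.smul_apply, ← hc]
    by_cases ha : F.deg (q + 1) a = F.deg q a₀
    · simp only [Y, if_pos ha]
      rfl
    · simp only [Y, if_neg ha]
      have := F.mat_mem q a a₀
      have hda := hd a
      rw [hS.bot_of_neg _ (by omega), AddSubgroup.mem_bot] at this
      rw [this, zero_smul, zero_smul]

/-- The inductive step of the lower bound: if some generator in homological degree at least `q`
attains the bound `γ`, then the quotient `𝒩₃` of `F_q` by its syzygies has a nonzero strand on the
extremal line, provided that the same is known for these syzygies. -/
lemma attained_step [IsNoetherianRing S] (hS : IsStdGraded 𝒜) (hover : GradedOver 𝒜 R₀)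
    (hx : GensDegOne 𝒜 x) (hU : UVan x ρ i₀ 𝒜 0) (hne : ¬ Van x 1 𝒜 i₀ (ρ - i₀))
    (F : MGFR 𝒜 ℳ ((algebraMap R₀ S) '' (IsLocalRing.maximalIdeal R₀ : Set R₀)))
    {P : ℕ} (hP : ∀ q, P < q → F.r q = 0) {q : ℕ}
    {𝒩₃ : ℤ → AddSubgroup N'} {g : (Fin (F.r q) → S) →ₗ[S] N'}
    (h : SES (Zf F.toGFC q) (F.fpiece S 𝒜 q) 𝒩₃ g) {γ : ℤ}
    (hd : ∀ q', ∀ a, F.deg q' a ≤ γ + q') (hat : ∃ q', q ≤ q' ∧ ∃ a, F.deg q' a = γ + q')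
    (ih : (∃ q', q + 1 ≤ q' ∧ ∃ a, F.deg q' a = γ + q') →
      ∃ i, ¬ Van x 1 (Zf F.toGFC q) i (γ + q + 1 + ρ - i)) :
    ∃ i, ¬ Van x 1 𝒩₃ i (γ + q + ρ - i) := by
  by_cases htail : ∃ q', q + 1 ≤ q' ∧ ∃ a, F.deg q' a = γ + q'
  · obtain ⟨i, hi⟩ := ih htail
    refine ⟨i - 1, fun hv => hi (h.van_left (stable_fpiece hS hx.1 F.toGFC q) ?_ ?_)⟩
    · convert hv using 1
      ring
    · exact uvan_fpiece hU (hd q) _ _ (by omega)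
  · push Not at htail
    obtain ⟨q', hq', a₀, ha₀⟩ := hat
    obtain rfl : q' = q := by
      by_contra hne
      exact htail q' (by omega) a₀ ha₀
    have hd' : ∀ q'', q' + 1 ≤ q'' → ∀ a, F.deg q'' a ≤ (γ - 1) + q'' := fun q'' hq'' a => by
      have := hd q'' a
      have := htail q'' hq'' a
      omega
    refine ⟨i₀, fun hv => ?_⟩
    obtain ⟨z, hz, hdz, hcon⟩ := exists_not_mem hS hover hx hne
    have hj : γ + q' + ρ - i₀ - F.deg q' a₀ = ρ - i₀ := by rw [ha₀]; ring
    obtain ⟨w, hw, r, c, y, hc, hy, hzw⟩ := crit hS hx.1 F h hv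
      (uvan_Zf hS hx.1 hU F hP (q' + 1) (fun q'' hq'' => hd' q'' (by omega)) _ _ (by
        push_cast; omega)) (a₀ := a₀) (fun a => by
        have := hd' (q' + 1) le_rfl a
        push_cast at this
        omega) (hj ▸ hz) hdz
    rw [hj] at hw hy
    exact hcon w hw r c y hc hy hzw

lemma attained_Zf [IsNoetherianRing S] (hS : IsStdGraded 𝒜) (hover : GradedOver 𝒜 R₀)
    (hx : GensDegOne 𝒜 x) (hU : UVan x ρ i₀ 𝒜 0) (hne : ¬ Van x 1 𝒜 i₀ (ρ - i₀))
    (F : MGFR 𝒜 ℳ ((algebraMap R₀ S) '' (IsLocalRing.maximalIdeal R₀ : Set R₀)))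
    {P : ℕ} (hP : ∀ q, P < q → F.r q = 0) {γ : ℤ} (hd : ∀ q', ∀ a, F.deg q' a ≤ γ + q') (q : ℕ)
    (hat : ∃ q', q + 1 ≤ q' ∧ ∃ a, F.deg q' a = γ + q') :
    ∃ i, ¬ Van x 1 (Zf F.toGFC q) i (γ + q + 1 + ρ - i) := by
  induction hm : P - q generalizing q with
  | zero =>
    obtain ⟨q', hq', a, -⟩ := hat
    have : F.r q' = 0 := hP q' (by omega)
    exact absurd a.2 (by omega)
  | succ m ih =>
    have := attained_step hS hover hx hU hne F hP (ses_succ hS F q) hd hat (fun h => by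
      have := ih (q + 1) h (by omega)
      push_cast at this ⊢
      exact this)
    push_cast at this
    simpa only [add_assoc] using this

/-- The regularity of a module is read off from the degrees of the generators in a minimal free
resolution. -/
lemma regVal_of_resolution [IsNoetherianRing S] (hS : IsStdGraded 𝒜) (hover : GradedOver 𝒜 R₀)
    (hx : GensDegOne 𝒜 x) (hM : IsGradedMod 𝒜 ℳ) (hU : UVan x ρ i₀ 𝒜 0)
    (hne : ¬ Van x 1 𝒜 i₀ (ρ - i₀))
    (F : MGFR 𝒜 ℳ ((algebraMap R₀ S) '' (IsLocalRing.maximalIdeal R₀ : Set R₀)))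
    {P : ℕ} (hP : ∀ q, P < q → F.r q = 0) {γ : ℤ} (hd : ∀ q', ∀ a, F.deg q' a ≤ γ + q')
    (hat : ∃ q', ∃ a, F.deg q' a = γ + q') : regVal x ℳ = Deg.of (γ + ρ) := by
  refine regVal_eq hS hM hx.1 (fun i j hij => ?_) ?_
  · refine uvan_step hS hx.1 hU (ses_zero hS hM F) (β := γ) (fun a => ?_) ?_ i j (Or.inl hij)
    · have := hd 0 a
      push_cast at this
      omega
    · have := uvan_Zf hS hx.1 hU F hP (γ := γ) 0 (fun q' _ => hd q')
      push_cast at this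
      rwa [add_zero] at this
  · obtain ⟨q', hq'⟩ := hat
    have := attained_step hS hover hx hU hne F hP (ses_zero hS hM F) hd ⟨q', by omega, hq'⟩
      (fun h => attained_Zf hS hover hx hU hne F hP hd 0 h)
    push_cast at this
    rwa [add_zero] at this

end Resolution

/-! ### Betti numbers -/

section Betti

variable {M : Type} [AddCommGroup M] [Module S M] {𝒜 : ℤ → AddSubgroup S}
  {ℳ : ℤ → AddSubgroup M}

lemma comp_eq_zero_of_neg (hS : IsStdGraded 𝒜) {j : ℤ} (hj : j < 0) (s : S) :
    comp hS.internal j s = 0 := by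
  have := comp_mem hS.internal j s
  rwa [hS.bot_of_neg j hj, AddSubgroup.mem_bot] at this

lemma comp_zero_of_mem_sPlus (hS : IsStdGraded 𝒜) {s : S} (hs : s ∈ sPlus 𝒜) :
    comp hS.internal 0 s = 0 := by
  suffices h : ∀ t : S, comp hS.internal 0 (t • s) = 0 by simpa using h 1
  induction hs using Submodule.span_induction with
  | mem y hy =>
    obtain ⟨i, hi, hy⟩ := hy
    intro t
    rw [comp_smul_hom hS (isGradedMod_self hS) hy, comp_eq_zero_of_neg hS (by omega), zero_smul]
  | zero => simp
  | add a b _ _ ha hb => intro t; rw [smul_add, map_add, ha, hb, add_zero]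
  | smul a b _ hb => intro t; rw [smul_smul]; exact hb _

lemma mk_eq_zero_of_pos {j : ℤ} (hj : 0 < j) {s : S} (hs : s ∈ 𝒜 j) :
    (sPlus 𝒜 : Submodule S S).mkQ s = 0 :=
  (Submodule.Quotient.mk_eq_zero _).2 (Ideal.subset_span ⟨j, hj, hs⟩)

/-- The residue ring `S / S₊` is concentrated in degree zero. -/
lemma qmPiece_eq_zero (hS : IsStdGraded 𝒜) {j : ℤ} (hj : j ≠ 0)
    {m : S ⧸ (sPlus 𝒜 : Submodule S S)}
    (hm : m ∈ qmPiece (sPlus 𝒜 : Submodule S S) 𝒜 j) : m = 0 := by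
  obtain ⟨s, hs, rfl⟩ := hm
  rcases hj.lt_or_gt with hj | hj
  · have hs' : s ∈ 𝒜 j := hs
    rw [hS.bot_of_neg j hj, AddSubgroup.mem_bot] at hs'
    rw [hs', map_zero]
  · exact mk_eq_zero_of_pos hj hs

lemma exists_deg_of_HNZ (hS : IsStdGraded 𝒜) {F : GFC 𝒜} {i : ℕ} {j : ℤ}
    (h : F.HNZ (S ⧸ (sPlus 𝒜 : Submodule S S)) (qmPiece (sPlus 𝒜 : Submodule S S) 𝒜) i j) :
    ∃ a, F.deg i a = j := by
  by_contra! hne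
  refine h (eq_bot_iff.2 ?_)
  rintro _ ⟨z, hz, rfl⟩
  have hz0 : z = 0 := by
    refine Subtype.ext (funext fun a => ?_)
    exact qmPiece_eq_zero hS (sub_ne_zero.2 (hne a).symm) (hz a (Set.mem_univ a))
  rw [hz0, AddSubgroup.mem_bot]
  exact map_zero _

variable {R₀ : Type} [CommRing R₀] [IsLocalRing R₀] [Algebra R₀ S]

/-- By minimality, the differentials are zero modulo the maximal homogeneous ideal. -/
lemma comp_mat_mem (hS : IsStdGraded 𝒜) (hover : GradedOver 𝒜 R₀)
    (F : MGFR 𝒜 ℳ ((algebraMap R₀ S) '' (IsLocalRing.maximalIdeal R₀ : Set R₀))) {q : ℕ}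
    (a : Fin (F.r (q + 1))) (b : Fin (F.r q)) (s : S) :
    ∃ c ∈ IsLocalRing.maximalIdeal R₀,
      comp hS.internal 0 (F.mat q a b • s) = algebraMap R₀ S c := by
  have hmem := F.mat_mem q a b
  rw [comp_smul (isGradedMod_self hS) (j := F.deg q b - F.deg (q + 1) a) (by ring) hmem]
  rcases lt_trichotomy (F.deg (q + 1) a) (F.deg q b) with hlt | heq | hgt
  · rw [hS.bot_of_neg _ (by omega), AddSubgroup.mem_bot] at hmem
    exact ⟨0, zero_mem _, by rw [hmem, zero_smul, map_zero]⟩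
  · obtain ⟨c, hc, hcm⟩ := F.minimal q a b heq
    rw [heq, sub_self]
    have h0 : comp hS.internal 0 s ∈ (𝒜 0 : Set S) := comp_mem _ _ _
    rw [hover.2] at h0
    obtain ⟨r, hr⟩ := h0
    exact ⟨c * r, Ideal.mul_mem_right _ _ hc, by rw [map_mul, hcm, hr, smul_eq_mul]⟩
  · exact ⟨0, zero_mem _, by rw [comp_eq_zero_of_neg hS (by omega), smul_zero, map_zero]⟩

/-- A generator of `F_q` of the largest possible degree, relative to `q`, has nonzero class in the
Betti homology. It is a cycle since the generators of `F_{q-1}` have strictly smaller degree, and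
minimality prevents it from being a boundary. -/
lemma HNZ_of_max (hS : IsStdGraded 𝒜) (hover : GradedOver 𝒜 R₀)
    (F : MGFR 𝒜 ℳ ((algebraMap R₀ S) '' (IsLocalRing.maximalIdeal R₀ : Set R₀))) {γ : ℤ}
    (hd : ∀ q', ∀ a, F.deg q' a ≤ γ + q') {q : ℕ} {a₀ : Fin (F.r q)}
    (ha₀ : F.deg q a₀ = γ + q) :
    F.toGFC.HNZ (S ⧸ (sPlus 𝒜 : Submodule S S)) (qmPiece (sPlus 𝒜 : Submodule S S) 𝒜) q
      (γ + q) := by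
  classical
  set I : Submodule S S := sPlus 𝒜 with hI
  let e : Fin (F.r q) → S ⧸ I := Pi.single a₀ (I.mkQ 1)
  have hcyc : e ∈ F.cyc (S ⧸ I) q := by
    cases q with
    | zero => trivial
    | succ q =>
      change F.tmap (S ⧸ I) q e = 0
      funext b
      change ∑ a, F.mat q a b • e a = 0
      rw [Finset.sum_eq_single a₀ (fun a _ ha => by
        simp only [e, Pi.single_eq_of_ne ha, smul_zero]) (fun h => absurd (Finset.mem_univ _) h)]
      simp only [e, Pi.single_eq_same]
      rw [← map_smul, smul_eq_mul, mul_one]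
      refine mk_eq_zero_of_pos ?_ (F.mat_mem q a₀ b)
      have := hd q b
      push_cast at ha₀
      omega
  have hdeg : e ∈ F.fpiece (S ⧸ I) (qmPiece I 𝒜) q (γ + q) := by
    intro a _
    by_cases ha : a = a₀
    · subst ha
      simp only [e, Pi.single_eq_same]
      rw [ha₀, sub_self]
      exact ⟨1, hS.one_mem, rfl⟩
    · simp only [e, Pi.single_eq_of_ne ha]
      exact zero_mem (qmPiece I 𝒜 (γ + q - F.deg q a))
  intro hbot
  have hmem : (Submodule.comap (F.cyc (S ⧸ I) q).subtype (F.bdry (S ⧸ I) q)).mkQ ⟨e, hcyc⟩ ∈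
      F.toGFC.Hpiece (S ⧸ I) (qmPiece I 𝒜) q (γ + q) := ⟨⟨e, hcyc⟩, hdeg, rfl⟩
  rw [hbot] at hmem
  have hb : (⟨e, hcyc⟩ : F.cyc (S ⧸ I) q) ∈
      Submodule.comap (F.cyc (S ⧸ I) q).subtype (F.bdry (S ⧸ I) q) :=
    (Submodule.Quotient.mk_eq_zero _).1 (AddSubgroup.mem_bot.1 hmem)
  obtain ⟨w, hw⟩ := hb
  have hw0 : ∑ a, F.mat q a a₀ • w a = e a₀ := congrFun hw a₀
  choose s hs using fun a => Submodule.mkQ_surjective I (w a)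
  choose c hc hcs using fun a => comp_mat_mem hS hover F a a₀ (s a)
  have h1 : (∑ a, F.mat q a a₀ • s a) - 1 ∈ sPlus 𝒜 := by
    refine (Submodule.Quotient.mk_eq_zero I).1 ?_
    change I.mkQ _ = 0
    rw [map_sub, map_sum, sub_eq_zero]
    simp only [e, Pi.single_eq_same] at hw0
    rw [← hw0]
    exact Finset.sum_congr rfl fun a _ => by rw [map_smul, hs]
  have h2 := comp_zero_of_mem_sPlus hS h1
  rw [map_sub, map_sum, comp_of_mem _ _ hS.one_mem, if_pos rfl,
    Finset.sum_congr rfl (fun a _ => hcs a), ← map_sum, ← map_one (algebraMap R₀ S),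
    sub_eq_zero] at h2
  have h3 := hover.1 h2
  have h4 : ∑ a, c a ∈ IsLocalRing.maximalIdeal R₀ := sum_mem fun a _ => hc a
  rw [h3] at h4
  exact (Ideal.ne_top_iff_one _).1 (IsLocalRing.maximalIdeal.isMaximal R₀).ne_top h4

lemma Deg.of_le {a b : ℤ} (h : a ≤ b) : Deg.of a ≤ Deg.of b :=
  WithBot.coe_le_coe.2 (WithTop.coe_le_coe.2 h)

lemma sSup_betti (hS : IsStdGraded 𝒜) (hover : GradedOver 𝒜 R₀)
    (F : MGFR 𝒜 ℳ ((algebraMap R₀ S) '' (IsLocalRing.maximalIdeal R₀ : Set R₀))) {γ : ℤ}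
    (hd : ∀ q', ∀ a, F.deg q' a ≤ γ + q') (hat : ∃ q', ∃ a, F.deg q' a = γ + q') :
    sSup {d : Deg | ∃ (i : ℕ) (j : ℤ),
        F.toGFC.HNZ (S ⧸ (sPlus 𝒜 : Submodule S S)) (qmPiece (sPlus 𝒜 : Submodule S S) 𝒜) i j ∧
        d = Deg.of (j - i)} = Deg.of γ := by
  refine le_antisymm (sSup_le ?_) (le_sSup ?_)
  · rintro d ⟨i, j, h, rfl⟩
    obtain ⟨a, rfl⟩ := exists_deg_of_HNZ hS h
    exact Deg.of_le (by have := hd i a; omega)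
  · obtain ⟨q, a, ha⟩ := hat
    exact ⟨q, γ + q, HNZ_of_max hS hover F hd ha, by rw [add_sub_cancel_right]⟩

/-- The regularity `ρ` of `S` in terms of Koszul cohomology, with the largest `i₀` for which the
strand `(i₀, ρ - i₀)` is nonzero. -/
lemma exists_ring_reg [IsNoetherianRing S] (hS : IsStdGraded 𝒜) (hover : GradedOver 𝒜 R₀)
    {x : Fin n → S} (hx : GensDegOne 𝒜 x) :
    ∃ ρ i₀, UVan x ρ i₀ 𝒜 0 ∧ ¬ Van x 1 𝒜 i₀ (ρ - i₀) := by
  have : Nontrivial S := hover.1.nontrivial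
  obtain ⟨J, hJ⟩ := exists_bound hS hx
  obtain ⟨ρ, ⟨i₁, hi₁⟩, hmax⟩ := Int.exists_greatest_of_bdd
    (P := fun s => ∃ i, ¬ Van x 1 𝒜 i (s - i))
    ⟨J, fun s ⟨i, hi⟩ => by
      by_contra hneg
      exact hi (hJ _ _ (by omega))⟩
    ⟨0, n, by rw [zero_sub]; exact exists_not_van hS x⟩
  obtain ⟨i₀, hi₀, hmax₀⟩ := Int.exists_greatest_of_bdd (P := fun i => ¬ Van x 1 𝒜 i (ρ - i))
    ⟨n, fun i hi => by
      by_contra hneg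
      exact hi (Van.of_range (Or.inr (by omega)))⟩ ⟨i₁, hi₁⟩
  refine ⟨ρ, i₀, fun i j hij => ?_, hi₀⟩
  by_contra hv
  rcases hij with hij | ⟨hij, hi⟩
  · have := hmax (j + i) ⟨i, by rwa [add_sub_cancel_right]⟩
    omega
  · have := hmax₀ i (by rwa [← zero_add ρ, ← hij, add_sub_cancel_right])
    omega

end Betti

end Algebra

end RegKoszul

/-- **Regularity and Betti numbers for modules of finite projective dimension**
(Theorem 5.3).  Let `S` be a standard graded ring over a Noetherian local ring and `M` a
finitely generated graded `S`-module of finite projective dimension over `S`.  Then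
`reg(M) = reg^S(M) + reg(S)`, where `reg` is the Castelnuovo–Mumford regularity defined via
graded local cohomology with respect to `S₊`, and `reg^S(M) = sup_i (b_i^S(M) − i)` is the
regularity measured by the graded Betti numbers `Tor_i^S(M, S₀)`. -/
theorem reg_eq_regBetti_add_regS (S : Type) [CommRing S] [IsNoetherianRing S]
    (𝒜 : ℤ → AddSubgroup S) (hSG : IsStdGraded 𝒜)
    (R₀ : Type) [CommRing R₀] [IsNoetherianRing R₀] [IsLocalRing R₀] [Algebra R₀ S]
    (hover : GradedOver 𝒜 R₀)
    {n : ℕ} (x : Fin n → S) (hx : GensDegOne 𝒜 x)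
    (M : Type) [AddCommGroup M] [Module S M] [Module.Finite S M]
    (ℳ : ℤ → AddSubgroup M) (hgm : IsGradedMod 𝒜 ℳ)
    (F : MGFR 𝒜 ℳ ((algebraMap R₀ S) '' (IsLocalRing.maximalIdeal R₀ : Set R₀)))
    (hfinpd : ∃ P : ℕ, ∀ i, P < i → F.r i = 0) :
    regVal x ℳ =
      sSup {d : Deg | ∃ (i : ℕ) (j : ℤ),
        F.toGFC.HNZ (S ⧸ (sPlus 𝒜 : Submodule S S)) (qmPiece (sPlus 𝒜 : Submodule S S) 𝒜) i j ∧
        d = Deg.of (j - i)} + regVal x 𝒜 := by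
  classical
  obtain ⟨P, hP⟩ := hfinpd
  obtain ⟨ρ, i₀, hU, hne⟩ := RegKoszul.exists_ring_reg hSG hover hx
  have hS : regVal x 𝒜 = Deg.of ρ := by
    refine RegKoszul.regVal_eq hSG (RegKoszul.isGradedMod_self hSG) hx.1
      (fun i j hij => hU i j (Or.inl (by omega))) ⟨i₀, hne⟩
  by_cases hgen : ∃ s q, ∃ a : Fin (F.r q), F.deg q a - q = s
  · obtain ⟨B, hB⟩ := ((Finset.range (P + 1)).biUnion fun q =>
      (Finset.univ : Finset (Fin (F.r q))).image fun a => F.deg q a - q).bddAbove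
    obtain ⟨γ, ⟨q, a, hqa⟩, hmax⟩ := Int.exists_greatest_of_bdd ⟨B, by
      rintro s ⟨q, a, rfl⟩
      refine hB ?_
      simp only [Finset.mem_coe, Finset.mem_biUnion, Finset.mem_range, Finset.mem_image,
        Finset.mem_univ, true_and]
      refine ⟨q, ?_, a, rfl⟩
      by_contra hq
      have := hP q (by omega)
      exact absurd a.2 (by omega)⟩ hgen
    have hd : ∀ q', ∀ a, F.deg q' a ≤ γ + q' := fun q' a => by
      have := hmax _ ⟨q', a, rfl⟩
      omega
    have hat : ∃ q', ∃ a, F.deg q' a = γ + q' := ⟨q, a, by omega⟩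
    rw [RegKoszul.regVal_of_resolution hSG hover hx hgm hU hne F hP hd hat,
      RegKoszul.sSup_betti hSG hover F hd hat, hS]
    rfl
  · -- without generators `M = 0`, and both sides are `⊥`
    have hM : ∀ m : M, m = 0 := fun m => by
      obtain ⟨z, rfl⟩ := F.augm_surj m
      exact Finset.sum_eq_zero fun a _ => absurd ⟨_, 0, a, rfl⟩ hgen
    rw [RegKoszul.regVal_eq_bot hM, sSup_eq_bot.2, WithBot.bot_add]
    rintro d ⟨i, j, h, -⟩
    obtain ⟨a, -⟩ := RegKoszul.exists_deg_of_HNZ hSG h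
    exact absurd ⟨_, i, a, rfl⟩ hgen
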